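/- arXiv:math/0609797 — 4 statements merged into one kernel-verified Lean document; each statement's English description precedes it below -/
import Mathlib

section
/- Let P_43 = lcm(1, …, 43) = 9419588158802421600 and let p(21) = 73, p(22) = 79, p(23) = 83, p(24) = 89 be the 21st through 24th prime numbers. Then each of the four numbers P_43 + 73 = 9419588158802421673, P_43 + 79 = 9419588158802421679, P_43 + 83 = 9419588158802421683, and P_43 + 89 = 9419588158802421689 is prime. -/
/-- Modular exponentiation by squaring, with `fuel` bits of the exponent. -/
def powMod (m a : ℕ) : ℕ → ℕ → ℕ
  | 0, _ => 1
  | fuel + 1, n => (powMod m a fuel (n / 2)) ^ 2 % m * a ^ (n % 2) % m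

theorem powMod_spec (m a fuel : ℕ) : ∀ n, n < 2 ^ fuel → powMod m a fuel n % m = a ^ n % m := by
  induction fuel with
  | zero =>
    intro n hn
    obtain rfl : n = 0 := by simpa using hn
    simp [powMod]
  | succ k ih =>
    intro n hn
    have h := ih (n / 2) (by rw [pow_succ] at hn; omega)
    have h2 : (powMod m a k (n / 2)) ^ 2 * a ^ (n % 2) ≡ (a ^ (n / 2)) ^ 2 * a ^ (n % 2) [MOD m] :=
      Nat.ModEq.mul_right _ (Nat.ModEq.pow 2 h)
    have h3 : (a ^ (n / 2)) ^ 2 * a ^ (n % 2) = a ^ n := by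
      rw [← pow_mul, ← pow_add]
      congr 1
      omega
    rw [h3] at h2
    simp only [powMod, Nat.mod_mod, Nat.mod_mul_mod]
    exact h2

theorem lucas_aux (p a : ℕ) (l : List ℕ) (hp : 1 < p) (hl : l.prod = p - 1)
    (hp64 : p < 2 ^ 64) (h : powMod p a 64 (p - 1) % p = 1)
    (hq : ∀ q ∈ l, q.Prime ∧ powMod p a 64 ((p - 1) / q) % p ≠ 1) : p.Prime := by
  have key : ∀ n : ℕ, n < 2 ^ 64 → ((a : ZMod p) ^ n = 1 ↔ powMod p a 64 n % p = 1) := by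
    intro n hn
    rw [powMod_spec p a 64 n hn]
    have h1 := ZMod.natCast_eq_natCast_iff' (a ^ n) 1 p
    rw [Nat.mod_eq_of_lt hp] at h1
    rw [← h1]
    push_cast
    rfl
  refine lucas_primality p (a : ZMod p) ((key _ (by omega)).2 h) ?_
  intro q hqp hdvd
  rw [← hl, hqp.prime.dvd_prod_iff] at hdvd
  obtain ⟨r, hr, hqr⟩ := hdvd
  obtain ⟨hrp, hne⟩ := hq r hr
  rw [(Nat.prime_dvd_prime_iff_eq hqp hrp).1 hqr]
  exact fun hc => hne ((key _ (lt_of_le_of_lt (Nat.div_le_self _ _) (by omega))).1 hc)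

theorem prime_225541129841 : Nat.Prime 225541129841 := by
  apply lucas_aux 225541129841 3 [2, 2, 2, 2, 5, 13, 23, 67, 140731] (by norm_num) (by norm_num) (by norm_num)
    (by decide +kernel)
  simp only [List.forall_mem_cons]
  refine ⟨⟨by norm_num, by decide +kernel⟩, ⟨by norm_num, by decide +kernel⟩, ⟨by norm_num, by decide +kernel⟩, ⟨by norm_num, by decide +kernel⟩, ⟨by norm_num, by decide +kernel⟩, ⟨by norm_num, by decide +kernel⟩, ⟨by norm_num, by decide +kernel⟩, ⟨by norm_num, by decide +kernel⟩, ⟨by norm_num, by decide +kernel⟩, by simp⟩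

theorem prime_9419588158802421673 : Nat.Prime 9419588158802421673 := by
  apply lucas_aux 9419588158802421673 7 [2, 2, 2, 3, 3, 251, 2311, 225541129841] (by norm_num) (by norm_num) (by norm_num)
    (by decide +kernel)
  simp only [List.forall_mem_cons]
  refine ⟨⟨by norm_num, by decide +kernel⟩, ⟨by norm_num, by decide +kernel⟩, ⟨by norm_num, by decide +kernel⟩, ⟨by norm_num, by decide +kernel⟩, ⟨by norm_num, by decide +kernel⟩, ⟨by norm_num, by decide +kernel⟩, ⟨by norm_num, by decide +kernel⟩, ⟨prime_225541129841, by decide +kernel⟩, by simp⟩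

theorem prime_9419588158802421679 : Nat.Prime 9419588158802421679 := by
  apply lucas_aux 9419588158802421679 6 [2, 3, 13, 3011, 8117, 30763, 160621] (by norm_num) (by norm_num) (by norm_num)
    (by decide +kernel)
  simp only [List.forall_mem_cons]
  refine ⟨⟨by norm_num, by decide +kernel⟩, ⟨by norm_num, by decide +kernel⟩, ⟨by norm_num, by decide +kernel⟩, ⟨by norm_num, by decide +kernel⟩, ⟨by norm_num, by decide +kernel⟩, ⟨by norm_num, by decide +kernel⟩, ⟨by norm_num, by decide +kernel⟩, by simp⟩

theorem prime_114873026326858801 : Nat.Prime 114873026326858801 := by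
  apply lucas_aux 114873026326858801 79 [2, 2, 2, 2, 3, 3, 3, 5, 5, 7, 11, 13, 17, 19, 23, 29, 31, 37, 43] (by norm_num) (by norm_num) (by norm_num)
    (by decide +kernel)
  simp only [List.forall_mem_cons]
  refine ⟨⟨by norm_num, by decide +kernel⟩, ⟨by norm_num, by decide +kernel⟩, ⟨by norm_num, by decide +kernel⟩, ⟨by norm_num, by decide +kernel⟩, ⟨by norm_num, by decide +kernel⟩, ⟨by norm_num, by decide +kernel⟩, ⟨by norm_num, by decide +kernel⟩, ⟨by norm_num, by decide +kernel⟩, ⟨by norm_num, by decide +kernel⟩, ⟨by norm_num, by decide +kernel⟩, ⟨by norm_num, by decide +kernel⟩, ⟨by norm_num, by decide +kernel⟩, ⟨by norm_num, by decide +kernel⟩, ⟨by norm_num, by decide +kernel⟩, ⟨by norm_num, by decide +kernel⟩, ⟨by norm_num, by decide +kernel⟩, ⟨by norm_num, by decide +kernel⟩, ⟨by norm_num, by decide +kernel⟩, ⟨by norm_num, by decide +kernel⟩, by simp⟩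

theorem prime_9419588158802421683 : Nat.Prime 9419588158802421683 := by
  apply lucas_aux 9419588158802421683 2 [2, 41, 114873026326858801] (by norm_num) (by norm_num) (by norm_num)
    (by decide +kernel)
  simp only [List.forall_mem_cons]
  refine ⟨⟨by norm_num, by decide +kernel⟩, ⟨by norm_num, by decide +kernel⟩, ⟨prime_114873026326858801, by decide +kernel⟩, by simp⟩

theorem prime_353711587 : Nat.Prime 353711587 := by
  apply lucas_aux 353711587 2 [2, 3, 5669, 10399] (by norm_num) (by norm_num) (by norm_num)
    (by decide +kernel)
  simp only [List.forall_mem_cons]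
  refine ⟨⟨by norm_num, by decide +kernel⟩, ⟨by norm_num, by decide +kernel⟩, ⟨by norm_num, by decide +kernel⟩, ⟨by norm_num, by decide +kernel⟩, by simp⟩

theorem prime_9419588158802421689 : Nat.Prime 9419588158802421689 := by
  apply lucas_aux 9419588158802421689 3 [2, 2, 2, 11, 1523, 198701, 353711587] (by norm_num) (by norm_num) (by norm_num)
    (by decide +kernel)
  simp only [List.forall_mem_cons]
  refine ⟨⟨by norm_num, by decide +kernel⟩, ⟨by norm_num, by decide +kernel⟩, ⟨by norm_num, by decide +kernel⟩, ⟨by norm_num, by decide +kernel⟩, ⟨by norm_num, by decide +kernel⟩, ⟨by norm_num, by decide +kernel⟩, ⟨prime_353711587, by decide +kernel⟩, by simp⟩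

theorem nth_aux (n p : ℕ) (hp : p.Prime) (h : Nat.count Nat.Prime p = n) :
    Nat.nth Nat.Prime n = p := by
  rw [← h]
  exact Nat.nth_count hp

theorem lcm_plus_prime_is_prime :
    Finset.lcm (Finset.Icc 1 43) id = 9419588158802421600 ∧
    Nat.nth Nat.Prime 20 = 73 ∧ Nat.nth Nat.Prime 21 = 79 ∧
    Nat.nth Nat.Prime 22 = 83 ∧ Nat.nth Nat.Prime 23 = 89 ∧
    Nat.Prime 9419588158802421673 ∧ Nat.Prime 9419588158802421679 ∧
    Nat.Prime 9419588158802421683 ∧ Nat.Prime 9419588158802421689 := by 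
  refine ⟨by decide +kernel, nth_aux _ _ (by norm_num) (by decide +kernel),
    nth_aux _ _ (by norm_num) (by decide +kernel), nth_aux _ _ (by norm_num) (by decide +kernel),
    nth_aux _ _ (by norm_num) (by decide +kernel), prime_9419588158802421673, prime_9419588158802421679, prime_9419588158802421683, prime_9419588158802421689⟩
end

section
/- The period P_n = lcm(1, …, n) grows exponentially in n at unit rate: the limit as n → ∞ of log(lcm(1, …, n)) / n equals 1. -/
open Filter Topology

open MeasureTheory Set Complex in
/-- Fejer-type kernel. -/
noncomputable def fejK (x : ℝ) : ℝ := 2 * (1 - Real.cos x) / x ^ 2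

lemma fejK_nonneg (x : ℝ) : 0 ≤ fejK x := by
  unfold fejK
  have := Real.cos_le_one x
  apply div_nonneg _ (sq_nonneg x)
  linarith

lemma fejK_measurable : Measurable fejK := by
  unfold fejK
  fun_prop

lemma fejK_le (x : ℝ) : fejK x ≤ 8 * (1 + x ^ 2)⁻¹ := by
  unfold fejK
  have h1 := Real.one_sub_sq_div_two_le_cos (x := x)
  have h2 := Real.neg_one_le_cos x
  rcases eq_or_ne x 0 with rfl | hx
  · simp
  have hx2 : 0 < x ^ 2 := by positivity
  rw [← div_eq_mul_inv, div_le_div_iff₀ hx2 (by positivity)]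
  by_cases h : x ^ 2 ≤ 1
  · nlinarith
  · nlinarith

lemma fejK_integrable : MeasureTheory.Integrable fejK := by
  refine (integrable_inv_one_add_sq.const_mul 8).mono' fejK_measurable.aestronglyMeasurable ?_
  refine Eventually.of_forall fun x => ?_
  rw [Real.norm_of_nonneg (fejK_nonneg x)]
  exact fejK_le x

lemma fejK_integral_pos : 0 < ∫ x, fejK x := by
  rw [MeasureTheory.integral_pos_iff_support_of_nonneg fejK_nonneg fejK_integrable]
  refine lt_of_lt_of_le ?_ (MeasureTheory.measure_mono (s := Set.Ioo (0:ℝ) 1) ?_)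
  · simp
  · intro x hx
    have hx0 : 0 < x := hx.1
    have : Real.cos x < 1 := by
      have := Real.cos_lt_cos_of_nonneg_of_le_pi (x := 0) (y := x) le_rfl
        (by linarith [hx.2, Real.pi_gt_three]) hx0
      simpa using this
    simp only [Function.mem_support, fejK]
    have : 0 < 2 * (1 - Real.cos x) / x ^ 2 := by
      apply div_pos <;> [linarith; positivity]
    exact this.ne'

lemma fej_half (c : ℂ) (hc : c ≠ 0) :
    ∫ t in (0:ℝ)..1, ((1:ℂ) - t) * Complex.exp (c * t) =
      Complex.exp c / c ^ 2 - 1 / c - 1 / c ^ 2 := by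
  have hd : ∀ t : ℝ, HasDerivAt (fun t : ℝ => (((1:ℂ) - t) / c + 1 / c ^ 2) * Complex.exp (c * t))
      (((1:ℂ) - t) * Complex.exp (c * t)) t := by
    intro t
    have h0 : HasDerivAt (fun t : ℝ => (t : ℂ)) 1 t := Complex.ofRealCLM.hasDerivAt
    have h1 := ((h0.const_sub 1).div_const c).add_const (1 / c ^ 2)
    have h2 := (h0.const_mul c).cexp
    refine (h1.mul h2).congr_deriv ?_
    field_simp
    ring
  rw [intervalIntegral.integral_eq_sub_of_hasDerivAt (fun t _ => hd t)]
  · simp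
    ring
  · apply Continuous.intervalIntegrable
    fun_prop

lemma fejK_fourier (x : ℝ) (hx : x ≠ 0) :
    ∫ t in (-1:ℝ)..1, ((1 - |t| : ℝ) : ℂ) * Complex.exp (Complex.I * t * x) = (fejK x : ℂ) := by
  have hint : ∀ a b : ℝ, IntervalIntegrable
      (fun t : ℝ => ((1 - |t| : ℝ) : ℂ) * Complex.exp (Complex.I * t * x)) MeasureTheory.volume a b := by
    intro a b
    apply Continuous.intervalIntegrable
    fun_prop
  rw [← intervalIntegral.integral_add_adjacent_intervals (hint (-1) 0) (hint 0 1)]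
  have hx' : (x : ℂ) ≠ 0 := by exact_mod_cast hx
  have e1 : ∫ t in (0:ℝ)..1, ((1 - |t| : ℝ) : ℂ) * Complex.exp (Complex.I * t * x) =
      ∫ t in (0:ℝ)..1, ((1:ℂ) - t) * Complex.exp ((Complex.I * x) * t) := by
    apply intervalIntegral.integral_congr
    intro t ht
    rw [Set.uIcc_of_le zero_le_one] at ht
    simp only [abs_of_nonneg ht.1]
    push_cast
    congr 2
    ring
  have e2 : ∫ t in (-1:ℝ)..0, ((1 - |t| : ℝ) : ℂ) * Complex.exp (Complex.I * t * x) =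
      ∫ t in (0:ℝ)..1, ((1:ℂ) - t) * Complex.exp ((-Complex.I * x) * t) := by
    have := intervalIntegral.integral_comp_neg (a := 0) (b := 1)
      (fun t : ℝ => ((1 - |t| : ℝ) : ℂ) * Complex.exp (Complex.I * t * x))
    simp only [neg_zero] at this
    rw [← this]
    apply intervalIntegral.integral_congr
    intro t ht
    rw [Set.uIcc_of_le zero_le_one] at ht
    simp only [abs_neg, abs_of_nonneg ht.1]
    push_cast
    congr 2
    ring
  rw [e1, e2, fej_half _ (by simp [hx]), fej_half _ (by simp [hx])]
  unfold fejK
  push_cast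
  rw [Complex.cos]
  have i2 : Complex.I ^ 2 = -1 := Complex.I_sq
  simp only [mul_pow, neg_sq, i2]
  have : Complex.I ≠ 0 := Complex.I_ne_zero
  have e3 : (x:ℂ) * Complex.I = Complex.I * x := by ring
  have e4 : -(x:ℂ) * Complex.I = -Complex.I * x := by ring
  rw [e3, e4]
  field_simp
  ring
open MeasureTheory Set Complex in
lemma wi_fubini (f : ℝ → ℝ) (hf : Measurable f) (M : ℝ) (hM : ∀ u, |f u| ≤ M) (G : ℂ → ℂ)
    (hL : ∀ z : ℂ, 0 < z.re → ∫ u in Ioi (0:ℝ), (f u : ℂ) * cexp (-z * u) = G z)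
    (y δ : ℝ) (hδ : 0 < δ) :
    ∫ t in (-1:ℝ)..1, ((1 - |t| : ℝ) : ℂ) * cexp (I * t * y) * G (δ + I * t) =
      ∫ u in Ioi (0:ℝ), ((f u * Real.exp (-δ * u) * fejK (y - u) : ℝ) : ℂ) := by
  have hM0 : 0 ≤ M := (abs_nonneg _).trans (hM 0)
  have e1 : ∀ t : ℝ, ((1 - |t| : ℝ) : ℂ) * cexp (I * t * y) * G (δ + I * t) =
      ∫ u in Ioi (0:ℝ), ((1 - |t| : ℝ) : ℂ) * cexp (I * t * y) *
        ((f u : ℂ) * cexp (-(δ + I * t) * u)) := by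
    intro t
    rw [integral_const_mul, hL _ (by simpa using hδ)]
  simp_rw [e1]
  rw [intervalIntegral_integral_swap]
  · apply integral_congr_ae
    have hne : ∀ᵐ u ∂(volume.restrict (Ioi (0:ℝ))), u ≠ y :=
      ae_restrict_of_ae (by simp [ae_iff])
    filter_upwards [hne] with u hu
    have := fejK_fourier (y - u) (sub_ne_zero.mpr hu.symm)
    push_cast
    rw [← this, ← intervalIntegral.integral_const_mul]
    apply intervalIntegral.integral_congr
    intro t _
    simp only
    have e : cexp (I * t * y) * cexp (-(δ + I * t) * u) =
        cexp (-δ * u) * cexp (I * t * ((y - u : ℝ) : ℂ)) := by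
      rw [← Complex.exp_add, ← Complex.exp_add]
      congr 1
      push_cast
      ring
    push_cast at e ⊢
    linear_combination (1 - ((|t| : ℝ) : ℂ)) * (f u : ℂ) * e
  · have hi : Integrable (fun u : ℝ => M * Real.exp (-δ * u)) (volume.restrict (Ioi (0:ℝ))) :=
      (integrableOn_exp_mul_Ioi (by linarith) 0).const_mul M
    have : IsFiniteMeasure (volume.restrict (uIoc (-1:ℝ) 1)) :=
      ⟨by rw [Measure.restrict_apply_univ, uIoc_of_le (by norm_num)]; exact measure_Ioc_lt_top⟩
    have hi2 := hi.comp_snd (volume.restrict (uIoc (-1:ℝ) 1))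
    refine hi2.mono' ?_ ?_
    · apply Measurable.aestronglyMeasurable
      unfold Function.uncurry
      fun_prop
    · have : ∀ᵐ p ∂((volume.restrict (uIoc (-1:ℝ) 1)).prod (volume.restrict (Ioi (0:ℝ)))),
          p ∈ (uIoc (-1:ℝ) 1) ×ˢ (Ioi (0:ℝ)) := by
        rw [Measure.prod_restrict]
        exact ae_restrict_mem (measurableSet_uIoc.prod measurableSet_Ioi)
      filter_upwards [this] with p hp
      obtain ⟨⟨h1, h2⟩, h3⟩ := hp
      simp only [Function.uncurry, norm_mul, Complex.norm_exp, Complex.norm_real, Real.norm_eq_abs]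
      have a1 : abs (1 - |p.1|) ≤ 1 := by
        have : |p.1| ≤ 1 := by
          rw [abs_le]; norm_num at h1 h2; constructor <;> linarith
        rw [abs_le]; constructor <;> linarith [abs_nonneg p.1]
      have a2 : (I * p.1 * y).re = 0 := by simp
      have a3 : (-(δ + I * p.1) * p.2).re = -δ * p.2 := by simp
      rw [a2, a3, Real.exp_zero, mul_one]
      calc _ ≤ 1 * (M * Real.exp (-δ * p.2)) := by
            gcongr
            exact hM _
        _ = _ := one_mul _

open MeasureTheory Set Complex in
lemma wi_limit (f : ℝ → ℝ) (hf : Measurable f) (M : ℝ) (hM : ∀ u, |f u| ≤ M) (G : ℂ → ℂ)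
    (hG : ContinuousOn G {z : ℂ | 0 ≤ z.re})
    (hL : ∀ z : ℂ, 0 < z.re → ∫ u in Ioi (0:ℝ), (f u : ℂ) * cexp (-z * u) = G z)
    (y : ℝ) :
    ∫ t in (-1:ℝ)..1, ((1 - |t| : ℝ) : ℂ) * cexp (I * t * y) * G (I * t) =
      ((∫ u in Ioi (0:ℝ), f u * fejK (y - u) : ℝ) : ℂ) := by
  have hM0 : 0 ≤ M := (abs_nonneg _).trans (hM 0)
  have hmaps : ∀ p ∈ (Icc (0:ℝ) 1) ×ˢ (Icc (-1:ℝ) 1), ((p.1 : ℂ) + I * p.2) ∈ {z : ℂ | 0 ≤ z.re} := by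
    intro p hp
    simpa using hp.1.1
  have hcont : ContinuousOn (fun p : ℝ × ℝ => G ((p.1 : ℂ) + I * p.2))
      ((Icc (0:ℝ) 1) ×ˢ (Icc (-1:ℝ) 1)) :=
    hG.comp (by fun_prop) hmaps
  obtain ⟨D, hD⟩ := (isCompact_Icc.prod isCompact_Icc).exists_bound_of_continuousOn hcont
  have hev : ∀ᶠ δ : ℝ in 𝓝[>] 0, 0 < δ ∧ δ ≤ 1 := by
    have h1 : ∀ᶠ δ : ℝ in 𝓝[>] 0, δ ∈ Ioc (0:ℝ) 1 := Ioc_mem_nhdsGT one_pos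
    exact h1
  have T1 : Tendsto (fun δ : ℝ => ∫ t in (-1:ℝ)..1,
      ((1 - |t| : ℝ) : ℂ) * cexp (I * t * y) * G (δ + I * t)) (𝓝[>] 0)
      (𝓝 (∫ t in (-1:ℝ)..1, ((1 - |t| : ℝ) : ℂ) * cexp (I * t * y) * G (I * t))) := by
    apply intervalIntegral.tendsto_integral_filter_of_dominated_convergence (fun _ => D)
    · filter_upwards [hev] with δ hδ
      apply ContinuousOn.aestronglyMeasurable _ measurableSet_uIoc
      have : Continuous (fun t : ℝ => G (δ + I * t)) := by
        rw [← continuousOn_univ]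
        refine hG.comp (by fun_prop) ?_
        intro t _
        simpa using hδ.1.le
      refine Continuous.continuousOn ?_
      refine Continuous.mul ?_ this
      fun_prop
    · filter_upwards [hev] with δ hδ
      refine Eventually.of_forall fun t ht => ?_
      rw [uIoc_of_le (by norm_num)] at ht
      have := hD (δ, t) ⟨⟨hδ.1.le, hδ.2⟩, ⟨ht.1.le, ht.2⟩⟩
      simp only [norm_mul, Complex.norm_exp, Complex.norm_real, Real.norm_eq_abs]
      have a1 : abs (1 - |t|) ≤ 1 := by
        have : |t| ≤ 1 := by
          rw [abs_le]; constructor <;> linarith [ht.1, ht.2]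
        rw [abs_le]; constructor <;> linarith [abs_nonneg t]
      have a2 : (I * t * y).re = 0 := by simp
      rw [a2, Real.exp_zero, mul_one]
      calc _ ≤ 1 * D := by
            gcongr
        _ = _ := one_mul _
    · simp
    · refine Eventually.of_forall fun t ht => ?_
      apply Tendsto.const_mul
      have h1 : ContinuousWithinAt G {z : ℂ | 0 ≤ z.re} (I * t) := hG _ (by simp)
      refine h1.tendsto.comp ?_
      apply tendsto_nhdsWithin_of_tendsto_nhds_of_eventually_within
      · have : Tendsto (fun δ : ℝ => (δ : ℂ) + I * t) (𝓝 0) (𝓝 (((0:ℝ) : ℂ) + I * t)) :=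
          Continuous.tendsto (by fun_prop) 0
        simp only [ofReal_zero, zero_add] at this
        exact this.mono_left nhdsWithin_le_nhds
      · filter_upwards [hev] with δ hδ
        simpa using hδ.1.le
  have T2 : Tendsto (fun δ : ℝ => ∫ u in Ioi (0:ℝ), f u * Real.exp (-δ * u) * fejK (y - u)) (𝓝[>] 0)
      (𝓝 (∫ u in Ioi (0:ℝ), f u * fejK (y - u))) := by
    apply tendsto_integral_filter_of_dominated_convergence (fun u => M * fejK (y - u))
    · refine Eventually.of_forall fun δ => ?_
      apply Measurable.aestronglyMeasurable
      have := fejK_measurable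
      fun_prop
    · filter_upwards [hev] with δ hδ
      filter_upwards [ae_restrict_mem measurableSet_Ioi] with u hu
      simp only [norm_mul, Real.norm_eq_abs, abs_of_nonneg (fejK_nonneg _), Real.abs_exp]
      have h3 : Real.exp (-δ * u) ≤ 1 := by
        rw [Real.exp_le_one_iff]
        have : 0 < u := hu
        nlinarith [mul_pos hδ.1 this]
      have h4 := fejK_nonneg (y - u)
      calc _ ≤ M * 1 * fejK (y - u) := by
            gcongr
            exact hM _
        _ = _ := by ring
    · exact ((fejK_integrable.comp_sub_left y).const_mul M).integrableOn
    · refine Eventually.of_forall fun u => ?_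
      have : Tendsto (fun δ : ℝ => f u * Real.exp (-δ * u) * fejK (y - u)) (𝓝 0)
          (𝓝 (f u * Real.exp (-0 * u) * fejK (y - u))) :=
        Continuous.tendsto (f := fun δ : ℝ => f u * Real.exp (-δ * u) * fejK (y - u)) (by fun_prop) 0
      simp only [neg_zero, zero_mul, Real.exp_zero, mul_one] at this
      exact this.mono_left nhdsWithin_le_nhds
  have T3 := (Complex.continuous_ofReal.tendsto _).comp T2
  refine tendsto_nhds_unique T1 (T3.congr' ?_)
  filter_upwards [hev] with δ hδ
  rw [wi_fubini f hf M hM G hL y δ hδ.1]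
  simp only [Function.comp]
  exact integral_complex_ofReal.symm

open MeasureTheory Set Complex in
lemma wi_tendsto (f : ℝ → ℝ) (hf : Measurable f) (M : ℝ) (hM : ∀ u, |f u| ≤ M) (G : ℂ → ℂ)
    (hG : ContinuousOn G {z : ℂ | 0 ≤ z.re})
    (hL : ∀ z : ℂ, 0 < z.re → ∫ u in Ioi (0:ℝ), (f u : ℂ) * cexp (-z * u) = G z) :
    Tendsto (fun y : ℝ => ∫ u in Ioi (0:ℝ), f u * fejK (y - u)) atTop (𝓝 0) := by
  have RL := Real.tendsto_integral_exp_smul_cocompact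
    ((Ioc (-1:ℝ) 1).indicator (fun t : ℝ => ((1 - |t| : ℝ) : ℂ) * G (I * t)))
  have hy : Tendsto (fun y : ℝ => -y / (2 * Real.pi)) atTop (cocompact ℝ) := by
    have : Tendsto (fun y : ℝ => -y / (2 * Real.pi)) atTop atBot :=
      tendsto_neg_atTop_atBot.atBot_div_const Real.two_pi_pos
    exact this.mono_right atBot_le_cocompact
  have T := RL.comp hy
  have T' : Tendsto (fun y : ℝ => ((∫ u in Ioi (0:ℝ), f u * fejK (y - u) : ℝ) : ℂ)) atTop (𝓝 0) := by
    refine T.congr fun y => ?_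
    rw [← wi_limit f hf M hM G hG hL y, intervalIntegral.integral_of_le (by norm_num),
      ← integral_indicator measurableSet_Ioc]
    simp only [Function.comp]
    congr 1
    ext t
    by_cases ht : t ∈ Ioc (-1:ℝ) 1
    · simp only [indicator_of_mem ht]
      rw [Circle.smul_def, Real.fourierChar_apply, smul_eq_mul]
      have : cexp (((2 * Real.pi * -(t * (-y / (2 * Real.pi))) : ℝ) : ℂ) * I) = cexp (I * t * y) := by
        congr 1
        have h : (2 * Real.pi * -(t * (-y / (2 * Real.pi))) : ℝ) = t * y := by
          field_simp
        rw [h]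
        push_cast
        ring
      rw [this]
      ring
    · simp only [indicator_of_notMem ht, smul_zero]
  have := (Complex.continuous_re.tendsto _).comp T'
  simpa [Function.comp_def] using this
open MeasureTheory Set in
lemma taub_bounds (b : ℝ → ℝ) (hb : Measurable b) (C : ℝ) (hb0 : ∀ u, 0 ≤ b u) (hbC : ∀ u, b u ≤ C)
    (l : ℝ) (hl : 0 < l)
    (hslow : ∀ u w, u ≤ w → b u ≤ b w * Real.exp ((w - u) / l)) (R y : ℝ) (hR : 0 < R) (hy : R < y) :
    b (y - R) * Real.exp (-(2 * R / l)) * (∫ v in Icc (-R) R, fejK v) - (∫ v, fejK v) ≤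
      (∫ u in Ioi (0:ℝ), (b u - 1) * fejK (y - u)) ∧
    (∫ u in Ioi (0:ℝ), (b u - 1) * fejK (y - u)) ≤
      (b (y + R) * Real.exp (2 * R / l) - 1) * (∫ v in Icc (-R) R, fejK v) +
      C * ((∫ v, fejK v) - ∫ v in Icc (-R) R, fejK v) := by
  have hC0 : 0 ≤ C := (hb0 0).trans (hbC 0)
  set h : ℝ → ℝ := fun u => fejK (y - u) with hh
  have hint : Integrable h := fejK_integrable.comp_sub_left y
  have hh0 : ∀ u, 0 ≤ h u := fun u => fejK_nonneg _
  set k : ℝ → ℝ := fun u => (Icc (-R) R).indicator fejK (y - u) with hk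
  have kint : Integrable k := (fejK_integrable.indicator measurableSet_Icc).comp_sub_left y
  have Ih : ∫ u, h u = ∫ v, fejK v := integral_sub_left_eq_self fejK volume y
  have Ik : ∫ u, k u = ∫ v in Icc (-R) R, fejK v := by
    rw [← integral_indicator measurableSet_Icc]
    exact integral_sub_left_eq_self ((Icc (-R) R).indicator fejK) volume y
  have bint : Integrable ((Ioi (0:ℝ)).indicator (fun u => (b u - 1) * fejK (y - u))) := by
    refine Integrable.indicator ?_ measurableSet_Ioi
    refine hint.bdd_mul (c := C + 1) (by fun_prop) (Eventually.of_forall fun u => ?_)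
    rw [Real.norm_eq_abs, abs_le]
    constructor <;> linarith [hb0 u, hbC u]
  have kin : ∀ u, y - R ≤ u → u ≤ y + R → k u = h u := by
    intro u h1 h2
    exact indicator_of_mem (s := Icc (-R) R) (show y - u ∈ Icc (-R) R by constructor <;> linarith) _
  have kout : ∀ u, ¬ (y - R ≤ u ∧ u ≤ y + R) → k u = 0 := by
    intro u h1
    refine indicator_of_notMem (s := Icc (-R) R) (fun h2 => h1 ?_) _
    constructor <;> linarith [h2.1, h2.2]
  rw [← integral_indicator measurableSet_Ioi, ← Ih, ← Ik]
  constructor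
  · rw [← integral_const_mul, ← integral_sub (kint.const_mul _) hint]
    refine integral_mono ((kint.const_mul _).sub hint) bint fun u => ?_
    simp only
    by_cases hu : y - R ≤ u ∧ u ≤ y + R
    · rw [kin u hu.1 hu.2, indicator_of_mem (show u ∈ Ioi (0:ℝ) from by
        have := hu.1
        simp only [mem_Ioi]; linarith)]
      have h1 := hslow _ _ hu.1
      have h2 : Real.exp ((u - (y - R)) / l) ≤ Real.exp (2 * R / l) := by
        gcongr
        linarith [hu.2]
      have h3 : b (y - R) * Real.exp (-(2 * R / l)) ≤ b u := by
        rw [Real.exp_neg, ← div_eq_mul_inv, div_le_iff₀ (Real.exp_pos _)]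
        exact h1.trans (mul_le_mul_of_nonneg_left h2 (hb0 u))
      have := mul_le_mul_of_nonneg_right h3 (hh0 u)
      change _ ≤ (b u - 1) * h u
      linarith
    · rw [kout u hu, mul_zero, zero_sub]
      by_cases hu0 : u ∈ Ioi (0:ℝ)
      · rw [indicator_of_mem hu0]
        change _ ≤ (b u - 1) * h u
        linarith [mul_nonneg (hb0 u) (hh0 u)]
      · rw [indicator_of_notMem hu0]
        linarith [hh0 u]
  · have hkint : Integrable (fun u => h u - k u) := hint.sub kint
    rw [← integral_sub hint kint, ← integral_const_mul, ← integral_const_mul,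
      ← integral_add (kint.const_mul _) (hkint.const_mul _)]
    refine integral_mono bint ((kint.const_mul _).add (hkint.const_mul _)) fun u => ?_
    simp only
    by_cases hu : y - R ≤ u ∧ u ≤ y + R
    · rw [kin u hu.1 hu.2, indicator_of_mem (show u ∈ Ioi (0:ℝ) from by
        have := hu.1
        simp only [mem_Ioi]; linarith)]
      have h1 := hslow _ _ hu.2
      have h2 : Real.exp ((y + R - u) / l) ≤ Real.exp (2 * R / l) := by
        gcongr
        linarith [hu.1]
      have h3 : b u ≤ b (y + R) * Real.exp (2 * R / l) :=
        h1.trans (mul_le_mul_of_nonneg_left h2 (hb0 _))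
      have := mul_le_mul_of_nonneg_right h3 (hh0 u)
      change (b u - 1) * h u ≤ _
      linarith
    · rw [kout u hu, mul_zero, zero_add, sub_zero]
      by_cases hu0 : u ∈ Ioi (0:ℝ)
      · rw [indicator_of_mem hu0]
        change (b u - 1) * h u ≤ _
        have := mul_le_mul_of_nonneg_right (hbC u) (hh0 u)
        linarith [hh0 u]
      · rw [indicator_of_notMem hu0]
        exact mul_nonneg hC0 (hh0 u)

open MeasureTheory Set Complex in
theorem wi_main (B : ℝ → ℝ) (hB : Measurable B) (C : ℝ) (hB0 : ∀ u, 0 ≤ B u) (hBC : ∀ u, B u ≤ C)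
    (hslow : ∀ u w, u ≤ w → B u ≤ B w * Real.exp (w - u))
    (G : ℂ → ℂ) (hG : ContinuousOn G {z : ℂ | 0 ≤ z.re})
    (hL : ∀ z : ℂ, 0 < z.re → ∫ u in Ioi (0:ℝ), ((B u - 1 : ℝ) : ℂ) * cexp (-z * u) = G z) :
    Tendsto B atTop (𝓝 1) := by
  have hC0 : 0 ≤ C := (hB0 0).trans (hBC 0)
  -- scaled limits
  have key : ∀ l : ℝ, 0 < l →
      Tendsto (fun y : ℝ => ∫ u in Ioi (0:ℝ), (B (u / l) - 1) * fejK (y - u)) atTop (𝓝 0) := by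
    intro l hl
    refine wi_tendsto (fun u => B (u / l) - 1) (by fun_prop) (C + 1) ?_ (fun z => l * G (l * z)) ?_ ?_
    · intro u
      rw [abs_le]
      constructor <;> linarith [hB0 (u / l), hBC (u / l)]
    · refine continuousOn_const.mul (hG.comp (by fun_prop) ?_)
      intro z hz
      simp only [mem_ofPred_eq] at hz ⊢
      rw [Complex.re_ofReal_mul]
      exact mul_nonneg hl.le hz
    · intro z hz
      have hlz : 0 < ((l : ℂ) * z).re := by
        rw [Complex.re_ofReal_mul]
        exact mul_pos hl hz
      rw [← hL _ hlz]
      have := integral_comp_mul_left_Ioi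
        (fun u : ℝ => ((B (u / l) - 1 : ℝ) : ℂ) * cexp (-z * u)) 0 hl
      rw [mul_zero] at this
      have hl' : (l : ℂ) ≠ 0 := by exact_mod_cast hl.ne'
      have e : ∫ u in Ioi (0:ℝ), ((B u - 1 : ℝ) : ℂ) * cexp (-(l * z) * u) =
          ∫ x in Ioi (0:ℝ), ((B (l * x / l) - 1 : ℝ) : ℂ) * cexp (-z * ((l * x : ℝ) : ℂ)) := by
        congr 1
        ext x
        rw [mul_div_cancel_left₀ _ hl.ne']
        congr 2
        push_cast
        ring
      rw [e, this, Complex.real_smul]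
      push_cast
      field_simp
  set I0 : ℝ := ∫ v, fejK v with hI0
  have hIpos : 0 < I0 := fejK_integral_pos
  have hm : Tendsto (fun R : ℝ => ∫ v in Icc (-R) R, fejK v) atTop (𝓝 I0) :=
    (aecover_Icc tendsto_neg_atTop_atBot tendsto_id).integral_tendsto_of_countably_generated
      fejK_integrable
  have hmle : ∀ R : ℝ, ∫ v in Icc (-R) R, fejK v ≤ I0 := fun R =>
    setIntegral_le_integral fejK_integrable (Eventually.of_forall fejK_nonneg)
  rw [Metric.tendsto_atTop']
  intro ε hε
  -- choose η
  have c1 : Tendsto (fun η : ℝ => Real.exp η * (I0 + η) / (I0 - η)) (𝓝 0) (𝓝 1) := by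
    have : ContinuousAt (fun η : ℝ => Real.exp η * (I0 + η) / (I0 - η)) 0 := by
      apply ContinuousAt.div (by fun_prop) (by fun_prop)
      simpa using hIpos.ne'
    have h := this.tendsto
    simpa [hIpos.ne'] using h
  have c2 : Tendsto (fun η : ℝ => Real.exp (-η) * (1 - (C + 1) * η / (I0 - η))) (𝓝 0) (𝓝 1) := by
    have : ContinuousAt (fun η : ℝ => Real.exp (-η) * (1 - (C + 1) * η / (I0 - η))) 0 := by
      apply ContinuousAt.mul (by fun_prop)
      apply ContinuousAt.sub (by fun_prop)
      apply ContinuousAt.div (by fun_prop) (by fun_prop)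
      simpa using hIpos.ne'
    have h := this.tendsto
    simpa using h
  have ev1 := (c1.eventually (gt_mem_nhds (show (1:ℝ) < 1 + ε by linarith)))
  have ev2 := (c2.eventually (lt_mem_nhds (show (1:ℝ) - ε < 1 by linarith)))
  have ev3 := gt_mem_nhds hIpos
  have ev : ∀ᶠ η : ℝ in 𝓝[>] 0, (Real.exp η * (I0 + η) / (I0 - η) < 1 + ε ∧
      1 - ε < Real.exp (-η) * (1 - (C + 1) * η / (I0 - η)) ∧ η < I0) ∧ 0 < η :=
    ((ev1.and (ev2.and ev3)).filter_mono nhdsWithin_le_nhds).and self_mem_nhdsWithin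
  obtain ⟨η, ⟨hη1, hη2, hηI⟩, hη⟩ := ev.exists
  obtain ⟨R, hRm, hR⟩ := ((hm.eventually (lt_mem_nhds (show I0 - η < I0 by linarith))).and
    (eventually_gt_atTop (0:ℝ))).exists
  set m : ℝ := ∫ v in Icc (-R) R, fejK v with hmdef
  have hmI : m ≤ I0 := hmle R
  have hm0 : 0 < m := by linarith
  set l : ℝ := 2 * R / η with hl
  have hlpos : 0 < l := by positivity
  have hRl : 2 * R / l = η := by
    rw [hl]; field_simp
  have hk := key l hlpos
  rw [Metric.tendsto_atTop'] at hk
  obtain ⟨Y, hY⟩ := hk η hη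
  have bounds := fun y hy => taub_bounds (fun u => B (u / l)) (by fun_prop) C (fun u => hB0 _)
    (fun u => hBC _) l hlpos (fun u w huw => by
      have := hslow (u / l) (w / l) (by gcongr)
      rwa [← sub_div] at this) R y hR hy
  refine ⟨(max Y R + R) / l, fun w hw => ?_⟩
  have hw' : max Y R + R < w * l := (div_lt_iff₀ hlpos).1 hw
  have hwY : Y + R < w * l := lt_of_le_of_lt (by gcongr; exact le_max_left _ _) hw'
  have hwR : R + R < w * l := lt_of_le_of_lt (by gcongr; exact le_max_right _ _) hw'
  have hmη : 0 < I0 - η := by linarith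
  rw [Real.dist_eq, abs_lt]
  constructor
  · have b1 := (bounds (w * l - R) (by linarith)).2
    have b2 := hY (w * l - R) (by linarith)
    rw [Real.dist_eq, sub_zero, abs_lt] at b2
    rw [hRl] at b1
    simp only [sub_add_cancel, mul_div_cancel_right₀ _ hlpos.ne'] at b1
    have b3 : m - (C + 1) * η ≤ B w * Real.exp η * m := by
      have : C * (I0 - m) ≤ C * η := by gcongr; linarith
      linarith [b2.1]
    have b4 : 1 - (C + 1) * η / (I0 - η) ≤ B w * Real.exp η := by
      have h5 : (C + 1) * η / m ≤ (C + 1) * η / (I0 - η) := by gcongr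
      have h6 : 1 - (C + 1) * η / m ≤ B w * Real.exp η := by
        have h7 : 1 - (C + 1) * η / m = (m - (C + 1) * η) / m := by field_simp
        rw [h7, div_le_iff₀ hm0]
        exact b3
      linarith
    have b5 : Real.exp (-η) * (1 - (C + 1) * η / (I0 - η)) ≤ B w := by
      calc _ ≤ Real.exp (-η) * (B w * Real.exp η) := by gcongr
        _ = B w * (Real.exp (-η) * Real.exp η) := by ring
        _ = B w := by rw [← Real.exp_add]; simp
    linarith
  · have b1 := (bounds (w * l + R) (by linarith)).1
    have b2 := hY (w * l + R) (by linarith)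
    rw [Real.dist_eq, sub_zero, abs_lt] at b2
    rw [hRl] at b1
    simp only [add_sub_cancel_right, mul_div_cancel_right₀ _ hlpos.ne'] at b1
    have b3 : B w * Real.exp (-η) * m ≤ I0 + η := by linarith [b2.2]
    have b4 : B w * Real.exp (-η) * (I0 - η) ≤ I0 + η := by
      refine le_trans ?_ b3
      have := hB0 w
      gcongr
    have b5 : B w ≤ Real.exp η * (I0 + η) / (I0 - η) := by
      rw [le_div_iff₀ hmη]
      calc B w * (I0 - η) = (Real.exp η * Real.exp (-η)) * (B w * (I0 - η)) := by
            rw [← Real.exp_add]; simp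
        _ = Real.exp η * (B w * Real.exp (-η) * (I0 - η)) := by ring
        _ ≤ _ := by gcongr
    linarith
open MeasureTheory Set Complex in
theorem psi_exp_tendsto :
    Tendsto (fun u : ℝ => Chebyshev.psi (Real.exp u) * Real.exp (-u)) atTop (𝓝 1) := by
  set A : ℂ → ℂ := ArithmeticFunction.vonMangoldt.LFunctionResidueClassAux (1 : ZMod 1) with hA
  have hAc : ContinuousOn A {s | 1 ≤ s.re} :=
    ArithmeticFunction.vonMangoldt.continuousOn_LFunctionResidueClassAux (1 : ZMod 1)
  have hAe : ∀ s : ℂ, 1 < s.re →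
      A s = LSeries (fun n => ((ArithmeticFunction.vonMangoldt n : ℝ) : ℂ)) s - 1 / (s - 1) := by
    intro s hs
    have := ArithmeticFunction.vonMangoldt.eqOn_LFunctionResidueClassAux
      (a := (1 : ZMod 1)) isUnit_one hs
    rw [hA, this]
    simp only [Nat.totient_one, Nat.cast_one, inv_one]
    congr 2
    ext n
    congr 1
    exact indicator_of_mem (by exact Subsingleton.elim _ _) _
  have hpsi0 := Chebyshev.psi_nonneg
  have hO : (fun n : ℕ => ∑ k ∈ Finset.Icc 1 n, ArithmeticFunction.vonMangoldt k)
      =O[atTop] fun n : ℕ => (n : ℝ) ^ (1:ℝ) := by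
    refine Asymptotics.IsBigO.of_bound (Real.log 4 + 4) (Eventually.of_forall fun n => ?_)
    have h1 := Chebyshev.psi_le_const_mul_self (x := (n : ℝ)) (Nat.cast_nonneg n)
    have h2 : ∑ k ∈ Finset.Icc 1 n, ArithmeticFunction.vonMangoldt k = Chebyshev.psi n := by
      rw [Chebyshev.psi, Nat.floor_natCast]
      rfl
    rw [h2, Real.norm_of_nonneg (hpsi0 _), Real.rpow_one, Real.norm_of_nonneg (Nat.cast_nonneg n)]
    exact h1
  have hmeas : Measurable (fun u : ℝ => Chebyshev.psi (Real.exp u) * Real.exp (-u)) := by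
    have := Chebyshev.psi_mono.measurable
    fun_prop
  have hbd : ∀ u : ℝ, Chebyshev.psi (Real.exp u) * Real.exp (-u) ≤ Real.log 4 + 4 := by
    intro u
    rw [Real.exp_neg, ← div_eq_mul_inv, div_le_iff₀ (Real.exp_pos _)]
    exact Chebyshev.psi_le_const_mul_self (Real.exp_pos _).le
  have hB0 : ∀ u : ℝ, 0 ≤ Chebyshev.psi (Real.exp u) * Real.exp (-u) := fun u =>
    mul_nonneg (hpsi0 _) (Real.exp_pos _).le
  refine wi_main _ hmeas (Real.log 4 + 4) hB0 hbd ?_ (fun z => (A (1 + z) - 1) / (1 + z)) ?_ ?_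
  · intro u w huw
    have h1 := Chebyshev.psi_mono (Real.exp_le_exp.2 huw)
    have : Real.exp (-w) * Real.exp (w - u) = Real.exp (-u) := by
      rw [← Real.exp_add]; congr 1; ring
    rw [mul_assoc, this]
    gcongr
  · apply ContinuousOn.div
    · refine ContinuousOn.sub (hAc.comp (by fun_prop) ?_) continuousOn_const
      intro z hz
      simp only [mem_ofPred_eq] at hz ⊢
      simpa using hz
    · fun_prop
    · intro z hz h
      simp only [mem_ofPred_eq] at hz
      have := congrArg Complex.re h
      simp at this
      linarith
  · intro z hz
    have hs : (1:ℝ) < (1 + z).re := by simpa using hz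
    have hint := LSeries_eq_mul_integral_of_nonneg ArithmeticFunction.vonMangoldt
      zero_le_one hs hO (fun n => ArithmeticFunction.vonMangoldt_nonneg)
    have himg : Real.exp '' Ioi (0:ℝ) = Ioi 1 := by
      ext x
      constructor
      · rintro ⟨u, hu, rfl⟩
        exact Real.one_lt_exp_iff.2 hu
      · intro hx
        have hx1 : (1:ℝ) < x := hx
        exact ⟨Real.log x, Real.log_pos hx1, Real.exp_log (by linarith)⟩
    rw [← himg, integral_image_eq_integral_abs_deriv_smul measurableSet_Ioi
      (fun x _ => (Real.hasDerivAt_exp x).hasDerivWithinAt) Real.exp_injective.injOn] at hint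
    have e1 : ∀ u : ℝ, |Real.exp u| • ((∑ k ∈ Finset.Icc 1 ⌊Real.exp u⌋₊,
        ((ArithmeticFunction.vonMangoldt k : ℝ) : ℂ)) * ((Real.exp u : ℝ) : ℂ) ^ (-(1 + z + 1))) =
        ((Chebyshev.psi (Real.exp u) * Real.exp (-u) : ℝ) : ℂ) * cexp (-z * u) := by
      intro u
      have h1 : (∑ k ∈ Finset.Icc 1 ⌊Real.exp u⌋₊,
        ((ArithmeticFunction.vonMangoldt k : ℝ) : ℂ)) = ((Chebyshev.psi (Real.exp u) : ℝ) : ℂ) := by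
        rw [Chebyshev.psi]
        push_cast
        rfl
      rw [h1, Real.abs_exp, Complex.real_smul, Complex.cpow_def_of_ne_zero
        (by exact_mod_cast (Real.exp_pos u).ne'), ← Complex.ofReal_log (Real.exp_pos u).le,
        Real.log_exp]
      push_cast
      have h2 : cexp u * cexp (u * (-(1 + z + 1))) = cexp (-u) * cexp (-z * u) := by
        rw [← Complex.exp_add, ← Complex.exp_add]
        congr 1
        ring
      linear_combination (Chebyshev.psi (Real.exp u) : ℂ) * h2
    simp_rw [e1] at hint
    have hz' : (-z).re < 0 := by simpa using hz
    have i2 : IntegrableOn (fun u : ℝ => cexp (-z * u)) (Ioi 0) :=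
      integrableOn_exp_mul_complex_Ioi hz' 0
    have i1 : IntegrableOn (fun u : ℝ =>
        ((Chebyshev.psi (Real.exp u) * Real.exp (-u) : ℝ) : ℂ) * cexp (-z * u)) (Ioi 0) := by
      refine Integrable.bdd_mul (c := Real.log 4 + 4) i2
        (Complex.measurable_ofReal.comp hmeas).aestronglyMeasurable
        (Eventually.of_forall fun u => ?_)
      rw [Complex.norm_real, Real.norm_of_nonneg (hB0 u)]
      exact hbd u
    have e2 : ∫ u in Ioi (0:ℝ),
        ((Chebyshev.psi (Real.exp u) * Real.exp (-u) - 1 : ℝ) : ℂ) * cexp (-z * u) =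
        (∫ u in Ioi (0:ℝ), ((Chebyshev.psi (Real.exp u) * Real.exp (-u) : ℝ) : ℂ) * cexp (-z * u)) -
        ∫ u in Ioi (0:ℝ), cexp (-z * u) := by
      rw [← integral_sub i1 i2]
      congr 1
      ext u
      push_cast
      ring
    rw [e2, integral_exp_mul_complex_Ioi hz', hAe _ hs, hint]
    have hz0 : z ≠ 0 := by
      rintro rfl
      simp at hz
    have hz1 : 1 + z ≠ 0 := by
      intro h
      rw [h] at hs
      simp at hs
      linarith
    simp only [ofReal_zero, mul_zero, Complex.exp_zero, add_sub_cancel_left]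
    field_simp
    ring

theorem log_lcm_div_tendsto_one :
    Tendsto (fun n : ℕ => Real.log (Finset.lcm (Finset.Icc 1 n) id : ℕ) / n)
      atTop (𝓝 1) := by
  have h := psi_exp_tendsto.comp (Real.tendsto_log_atTop.comp tendsto_natCast_atTop_atTop)
  refine h.congr' ?_
  filter_upwards [eventually_gt_atTop 0] with n hn
  have hn' : (0:ℝ) < n := by exact_mod_cast hn
  simp only [Function.comp]
  rw [Real.exp_neg, Real.exp_log hn', Chebyshev.psi_eq_log_lcmUpto, ← div_eq_mul_inv]
  rfl
end

section
/- (Main asymptotic term derived from the R-matrix.) The limit as n → ∞ of π(n) · log n / n equals 1; that is, π(n) ~ n / log n. -/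
open Filter Topology

namespace PNTaux
open MeasureTheory Complex Set

/-- The tent function. -/
noncomputable def tent (u : ℝ) : ℝ := max 0 (1 - |u|)

/-- The Fejer kernel, the Fourier transform of the tent. -/
noncomputable def fejer (x : ℝ) : ℝ := (Real.sinc (x / 2)) ^ 2

lemma tent_cont : Continuous tent := by unfold tent; fun_prop

lemma fejer_cont : Continuous fejer := by
  unfold fejer; exact (Real.continuous_sinc.comp (by fun_prop)).pow 2

lemma tent_nonneg (u : ℝ) : 0 ≤ tent u := le_max_left _ _

lemma tent_eq_zero {u : ℝ} (hu : u ∉ Ioc (-1 : ℝ) 1) : tent u = 0 := by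
  unfold tent
  apply max_eq_left
  rw [mem_Ioc, not_and_or] at hu
  rcases hu with h | h
  · have := neg_le_abs u; linarith
  · have := le_abs_self u; linarith

lemma tent_le_one (u : ℝ) : tent u ≤ 1 := by
  unfold tent
  apply max_le zero_le_one
  have := abs_nonneg u; linarith

lemma tent_compact : HasCompactSupport tent :=
  HasCompactSupport.intro (K := Icc (-1) 1) isCompact_Icc
    (fun _ hx => tent_eq_zero (fun h => hx (Ioc_subset_Icc_self h)))

lemma tent_integrable : Integrable tent :=
  tent_cont.integrable_of_hasCompactSupport tent_compact

lemma fejer_nonneg (x : ℝ) : 0 ≤ fejer x := sq_nonneg _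

lemma fejer_le (x : ℝ) : fejer x ≤ 5 * (1 + x ^ 2)⁻¹ := by
  have h1 : fejer x ≤ 1 := by
    unfold fejer
    rw [sq_le_one_iff_abs_le_one]; exact Real.abs_sinc_le_one _
  have h2 : fejer x * x ^ 2 ≤ 4 := by
    unfold fejer
    by_cases hx : x = 0
    · simp [hx]
    · rw [Real.sinc_of_ne_zero (by simpa using hx)]
      have := Real.sin_sq_le_one (x / 2)
      have e : (Real.sin (x / 2) / (x / 2)) ^ 2 * x ^ 2 = 4 * Real.sin (x / 2) ^ 2 := by
        field_simp; ring
      rw [e]; linarith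
  rw [← div_eq_mul_inv, le_div_iff₀ (by positivity)]
  linarith

lemma fejer_integrable : Integrable fejer := by
  refine (integrable_inv_one_add_sq.const_mul 5).mono' fejer_cont.aestronglyMeasurable ?_
  refine Eventually.of_forall fun x => ?_
  rw [Real.norm_of_nonneg (fejer_nonneg x)]
  exact fejer_le x

lemma fejer_neg (x : ℝ) : fejer (-x) = fejer x := by
  unfold fejer; rw [neg_div, Real.sinc_neg]

lemma fejer_int_pos : 0 < ∫ x, fejer x := by
  refine integral_pos_of_integrable_nonneg_nonzero (x := 0) fejer_cont fejer_integrable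
    fejer_nonneg ?_
  simp [fejer]

lemma tent_fourier (x : ℝ) : ∫ u : ℝ, (tent u : ℂ) * cexp (I * x * u) = fejer x := by
  have h0 : ∫ u : ℝ, (tent u : ℂ) * cexp (I * x * u)
      = ∫ u in (-1 : ℝ)..1, (tent u : ℂ) * cexp (I * x * u) := by
    rw [intervalIntegral.integral_of_le (by norm_num),
      setIntegral_eq_integral_of_forall_compl_eq_zero]
    intro u hu
    simp [tent_eq_zero hu]
  have hc : Continuous fun u : ℝ => (tent u : ℂ) * cexp (I * x * u) := by
    have := tent_cont
    fun_prop
  rw [h0, ← intervalIntegral.integral_add_adjacent_intervals (b := 0)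
    (hc.intervalIntegrable _ _) (hc.intervalIntegrable _ _)]
  have e1 : ∫ u in (-1 : ℝ)..0, (tent u : ℂ) * cexp (I * x * u)
      = ∫ u in (-1 : ℝ)..0, (1 + (u : ℂ)) * cexp (I * x * u) := by
    refine intervalIntegral.integral_congr fun u hu => ?_
    rw [uIcc_of_le (by norm_num)] at hu
    have : tent u = 1 + u := by
      unfold tent; rw [abs_of_nonpos hu.2, max_eq_right] <;> linarith [hu.1]
    simp [this]
  have e2 : ∫ u in (0 : ℝ)..1, (tent u : ℂ) * cexp (I * x * u)
      = ∫ u in (0 : ℝ)..1, (1 - (u : ℂ)) * cexp (I * x * u) := by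
    refine intervalIntegral.integral_congr fun u hu => ?_
    rw [uIcc_of_le (by norm_num)] at hu
    have : tent u = 1 - u := by
      unfold tent; rw [abs_of_nonneg hu.1, max_eq_right]; linarith [hu.2]
    simp [this]
  rw [e1, e2]
  by_cases hx : x = 0
  · subst hx
    have f1 : ∫ u in (-1 : ℝ)..0, (1 + (u : ℂ)) = 1 / 2 := by
      have : ∫ u in (-1 : ℝ)..0, (1 + (u : ℂ)) = ((∫ u in (-1 : ℝ)..0, (1 + u) : ℝ) : ℂ) := by
        rw [← intervalIntegral.integral_ofReal]; simp
      rw [this, intervalIntegral.integral_add (by simp) (by simp)]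
      simp; norm_num
    have f2 : ∫ u in (0 : ℝ)..1, (1 - (u : ℂ)) = 1 / 2 := by
      have : ∫ u in (0 : ℝ)..1, (1 - (u : ℂ)) = ((∫ u in (0 : ℝ)..1, (1 - u) : ℝ) : ℂ) := by
        rw [← intervalIntegral.integral_ofReal]; simp
      rw [this, intervalIntegral.integral_sub (by simp) (by simp)]
      simp; norm_num
    simp only [ofReal_zero, mul_zero, zero_mul, Complex.exp_zero, mul_one, f1, f2, fejer]
    norm_num
  · set c : ℂ := I * x with hcdef
    have hc0 : c ≠ 0 := by simp [hcdef, hx]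
    have hE : ∀ u : ℝ, HasDerivAt (fun u : ℝ => cexp (c * u)) (c * cexp (c * u)) u := by
      intro u
      have := ((hasDerivAt_id (u : ℂ)).const_mul c).cexp.comp_ofReal
      simpa [mul_comm] using this
    have hid : ∀ u : ℝ, HasDerivAt (fun u : ℝ => (u : ℂ)) 1 u := fun u =>
      (hasDerivAt_id (u : ℂ)).comp_ofReal
    have g1 : ∫ u in (-1 : ℝ)..0, (1 + (u : ℂ)) * cexp (c * u)
        = ((1 + ((0 : ℝ) : ℂ)) * cexp (c * (0 : ℝ)) / c - cexp (c * (0 : ℝ)) / c ^ 2)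
          - ((1 + ((-1 : ℝ) : ℂ)) * cexp (c * (-1 : ℝ)) / c - cexp (c * (-1 : ℝ)) / c ^ 2) := by
      refine intervalIntegral.integral_eq_sub_of_hasDerivAt
        (f := fun u : ℝ => (1 + (u : ℂ)) * cexp (c * u) / c - cexp (c * u) / c ^ 2)
        (fun u _ => ?_) (Continuous.intervalIntegrable (by fun_prop) _ _)
      convert! ((((hid u).const_add 1).mul (hE u)).div_const c).sub ((hE u).div_const (c ^ 2))
        using 1
      field_simp; ring
    have g2 : ∫ u in (0 : ℝ)..1, (1 - (u : ℂ)) * cexp (c * u)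
        = ((1 - ((1 : ℝ) : ℂ)) * cexp (c * (1 : ℝ)) / c + cexp (c * (1 : ℝ)) / c ^ 2)
          - ((1 - ((0 : ℝ) : ℂ)) * cexp (c * (0 : ℝ)) / c + cexp (c * (0 : ℝ)) / c ^ 2) := by
      refine intervalIntegral.integral_eq_sub_of_hasDerivAt
        (f := fun u : ℝ => (1 - (u : ℂ)) * cexp (c * u) / c + cexp (c * u) / c ^ 2)
        (fun u _ => ?_) (Continuous.intervalIntegrable (by fun_prop) _ _)
      convert! ((((hid u).const_sub 1).mul (hE u)).div_const c).add ((hE u).div_const (c ^ 2))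
        using 1
      field_simp; ring
    rw [g1, g2]
    have hcos : cexp c + cexp (-c) = 2 * Complex.cos x := by
      rw [Complex.two_cos, hcdef, mul_comm I, neg_mul]
    have hK : fejer x = 2 * (1 - Real.cos x) / x ^ 2 := by
      unfold fejer
      rw [Real.sinc_of_ne_zero (by simpa using hx), div_pow, Real.sin_sq_eq_half_sub]
      rw [show 2 * (x / 2) = x by ring]
      field_simp
    rw [hK]
    push_cast
    have hc2 : c ^ 2 = - (x : ℂ) ^ 2 := by rw [hcdef, mul_pow, I_sq]; ring
    have hxC : (x : ℂ) ≠ 0 := by exact_mod_cast hx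
    have : Complex.cos x = (cexp c + cexp (-c)) / 2 := by rw [hcos]; ring
    rw [this, hc2]
    simp
    field_simp; ring


/-- Normalised Chebyshev function. -/
noncomputable def av (t : ℝ) : ℝ := Chebyshev.psi (Real.exp t) * Real.exp (-t)

lemma av_nonneg (t : ℝ) : 0 ≤ av t := mul_nonneg (Chebyshev.psi_nonneg _) (Real.exp_pos _).le

lemma av_le (t : ℝ) : av t ≤ Real.log 4 + 4 := by
  unfold av
  have h := Chebyshev.psi_le_const_mul_self (Real.exp_pos t).le
  rw [Real.exp_neg, ← div_eq_mul_inv, div_le_iff₀ (Real.exp_pos t)]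
  exact h

lemma av_mono {s t : ℝ} (h : s ≤ t) : av s ≤ av t * Real.exp (t - s) := by
  unfold av
  have h1 := Chebyshev.psi_mono (Real.exp_le_exp.mpr h)
  rw [mul_assoc, ← Real.exp_add, show -t + (t - s) = -s by ring]
  exact mul_le_mul_of_nonneg_right h1 (Real.exp_pos _).le

lemma av_neg {t : ℝ} (h : t ≤ 0) : av t = 0 := by
  unfold av
  rw [Chebyshev.psi_eq_zero_of_le_one (Real.exp_le_one_iff.mpr h), zero_mul]

lemma av_meas : Measurable av :=
  (Chebyshev.psi_mono.measurable.comp Real.measurable_exp).mul (by fun_prop)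

lemma laplace_av {s : ℂ} (hs : 0 < s.re) :
    ∫ t in Ioi (0 : ℝ), (av t : ℂ) * cexp (-s * t)
      = LSeries (fun n => (ArithmeticFunction.vonMangoldt n : ℂ)) (s + 1) / (s + 1) := by
  have hs1 : s + 1 ≠ 0 := by
    intro h
    have := congrArg Complex.re h
    simp at this; linarith
  have hpsi : ∀ n : ℕ, ∑ k ∈ Finset.Icc 1 n, ArithmeticFunction.vonMangoldt k
      = Chebyshev.psi n := by
    intro n
    simp only [Chebyshev.psi, Nat.floor_natCast]
    rfl
  have hO : (fun n : ℕ => ∑ k ∈ Finset.Icc 1 n, ArithmeticFunction.vonMangoldt k)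
      =O[atTop] fun n : ℕ => (n : ℝ) ^ (1 : ℝ) := by
    refine Asymptotics.IsBigO.of_bound (Real.log 4 + 4) (Eventually.of_forall fun n => ?_)
    rw [hpsi, Real.rpow_one, Real.norm_of_nonneg (Chebyshev.psi_nonneg _),
      Real.norm_of_nonneg (Nat.cast_nonneg n)]
    exact Chebyshev.psi_le_const_mul_self (Nat.cast_nonneg n)
  rw [LSeries_eq_mul_integral_of_nonneg (s := s + 1) (r := 1) _ zero_le_one (by simpa using hs) hO
    (fun n => ArithmeticFunction.vonMangoldt_nonneg), mul_div_cancel_left₀ _ hs1]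
  have him : Real.exp '' Ioi 0 = Ioi 1 := by
    ext y; constructor
    · rintro ⟨t, ht, rfl⟩
      exact Real.one_lt_exp_iff.mpr ht
    · intro hy
      have hy0 : (0 : ℝ) < y := lt_trans one_pos hy
      exact ⟨Real.log y, Real.log_pos hy, Real.exp_log hy0⟩
  rw [← him, integral_image_eq_integral_abs_deriv_smul (f' := Real.exp) measurableSet_Ioi
    (fun x _ => (Real.hasDerivAt_exp x).hasDerivWithinAt) Real.exp_injective.injOn]
  refine setIntegral_congr_fun measurableSet_Ioi fun t _ => ?_
  have h1 : ∑ k ∈ Finset.Icc 1 ⌊Real.exp t⌋₊, (ArithmeticFunction.vonMangoldt k : ℂ)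
      = (Chebyshev.psi (Real.exp t) : ℂ) := by
    rw [Chebyshev.psi_eq_psi_coe_floor, ← hpsi]; push_cast; rfl
  rw [h1, abs_of_pos (Real.exp_pos t), av, Complex.cpow_def_of_ne_zero
    (by exact_mod_cast (Real.exp_pos t).ne'), ← Complex.ofReal_log (Real.exp_pos t).le,
    Real.log_exp, Complex.real_smul]
  push_cast
  have e : cexp (-t) * cexp (-s * t) = cexp t * cexp (t * -(s + 1 + 1)) := by
    rw [← Complex.exp_add, ← Complex.exp_add]; congr 1; ring
  rw [mul_assoc, e]; ring

/-- The continuous extension of the Laplace transform of `av - 1`. -/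
noncomputable def HH (s : ℂ) : ℂ :=
  (ArithmeticFunction.vonMangoldt.LFunctionResidueClassAux (q := 1) 1 (s + 1) - 1) / (s + 1)

lemma HH_cont : ContinuousOn HH {s | 0 ≤ s.re} := by
  unfold HH
  refine ContinuousOn.div (ContinuousOn.sub ?_ continuousOn_const) (by fun_prop) ?_
  · refine (ArithmeticFunction.vonMangoldt.continuousOn_LFunctionResidueClassAux
      (q := 1) 1).comp (by fun_prop) ?_
    intro s hs
    simpa using hs
  · intro s hs h
    have := congrArg Complex.re h
    have hs' : 0 ≤ s.re := hs
    simp at this; linarith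

lemma int_exp {s : ℂ} (hs : 0 < s.re) :
    IntegrableOn (fun t : ℝ => cexp (-s * t)) (Ioi 0) :=
  integrableOn_exp_mul_complex_Ioi (by simpa using hs) 0

lemma laplace_b {s : ℂ} (hs : 0 < s.re) :
    ∫ t in Ioi (0 : ℝ), ((av t - 1 : ℝ) : ℂ) * cexp (-s * t) = HH s := by
  have hs0 : s ≠ 0 := by
    rintro rfl; simp at hs
  have hs1 : s + 1 ≠ 0 := by
    intro h
    have := congrArg Complex.re h
    simp at this; linarith
  have i1 : IntegrableOn (fun t : ℝ => (av t : ℂ) * cexp (-s * t)) (Ioi 0) := by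
    refine (int_exp hs).bdd_mul (c := Real.log 4 + 4)
      (Complex.measurable_ofReal.comp av_meas).aestronglyMeasurable ?_
    refine Eventually.of_forall fun t => ?_
    simp only [Complex.norm_real, Real.norm_of_nonneg (av_nonneg t)]
    exact av_le t
  have : ∀ t : ℝ, ((av t - 1 : ℝ) : ℂ) * cexp (-s * t)
      = (av t : ℂ) * cexp (-s * t) - cexp (-s * t) := by
    intro t; push_cast; ring
  simp_rw [this]
  rw [integral_sub i1 (int_exp hs), laplace_av hs,
    integral_exp_mul_complex_Ioi (by simpa using hs)]
  have h := ArithmeticFunction.vonMangoldt.eqOn_LFunctionResidueClassAux (q := 1)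
    (a := 1) isUnit_one (x := s + 1) (by simpa using hs)
  have hr : (fun n : ℕ => ((ArithmeticFunction.vonMangoldt.residueClass (1 : ZMod 1) n : ℝ) : ℂ))
      = fun n => (ArithmeticFunction.vonMangoldt n : ℂ) := by
    ext n
    simp [ArithmeticFunction.vonMangoldt.residueClass, Set.indicator, Subsingleton.elim _ (1 : ZMod 1)]
  simp only [hr] at h
  unfold HH
  rw [h]
  simp
  field_simp
  ring


lemma b_bound (t : ℝ) : |av t - 1| ≤ Real.log 4 + 4 := by
  have h1 := av_nonneg t
  have h2 := av_le t
  have h3 : 0 ≤ Real.log 4 := Real.log_nonneg (by norm_num)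
  rw [abs_le]; constructor <;> linarith

lemma b_exp_int {σ : ℝ} (hσ : 0 < σ) :
    IntegrableOn (fun t : ℝ => ((av t - 1 : ℝ) : ℂ) * cexp (-σ * t)) (Ioi 0) := by
  have h : Measurable fun t : ℝ => ((av t - 1 : ℝ) : ℂ) :=
    Complex.measurable_ofReal.comp (av_meas.sub_const 1)
  refine (int_exp (s := σ) (by simpa using hσ)).bdd_mul (c := Real.log 4 + 4)
    h.aestronglyMeasurable ?_
  refine Eventually.of_forall fun t => ?_
  rw [Complex.norm_real]
  exact b_bound t

lemma key_pos {l σ : ℝ} (hσ : 0 < σ) (T : ℝ) :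
    ∫ u : ℝ, (tent u : ℂ) * HH (σ + I * l * u) * cexp (I * (l * T) * u)
      = ∫ t in Ioi (0 : ℝ), ((av t - 1 : ℝ) : ℂ) * cexp (-σ * t) * (fejer (l * (T - t)) : ℂ) := by
  have h1 : ∀ u : ℝ, (tent u : ℂ) * HH (σ + I * l * u) * cexp (I * (l * T) * u)
      = ∫ t in Ioi (0 : ℝ), (tent u : ℂ) * (((av t - 1 : ℝ) : ℂ) * cexp (-σ * t)) *
          cexp (I * (l * (T - t) : ℝ) * u) := by
    intro u
    rw [← laplace_b (s := σ + I * l * u) (by simpa using hσ), mul_right_comm,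
      ← integral_const_mul]
    refine integral_congr_ae (Eventually.of_forall fun t => ?_)
    simp only
    have e : cexp (I * (l * T) * u) * cexp (-(σ + I * l * u) * t)
        = cexp (-σ * t) * cexp (I * (l * (T - t) : ℝ) * u) := by
      rw [← Complex.exp_add, ← Complex.exp_add]; congr 1; push_cast; ring
    calc _ = (tent u : ℂ) * ((av t - 1 : ℝ) : ℂ) *
          (cexp (I * (l * T) * u) * cexp (-(σ + I * l * u) * t)) := by ring
      _ = _ := by rw [e]; ring
  simp_rw [h1]
  rw [integral_integral_swap]
  · refine integral_congr_ae (Eventually.of_forall fun t => ?_)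
    simp only
    rw [← tent_fourier, ← integral_const_mul]
    refine integral_congr_ae (Eventually.of_forall fun u => ?_)
    simp only
    ring
  · have hp := (tent_integrable.ofReal (𝕜 := ℂ)).mul_prod (b_exp_int hσ)
    refine hp.mul_bdd (c := 1) (Continuous.aestronglyMeasurable (by fun_prop)) ?_
    refine Eventually.of_forall fun z => ?_
    rw [show I * ((l * (T - z.2) : ℝ) : ℂ) * (z.1 : ℂ) = ((l * (T - z.2) * z.1 : ℝ) : ℂ) * I by
      push_cast; ring, Complex.norm_exp_ofReal_mul_I]

lemma key_zero {l : ℝ} (hl : 0 < l) (T : ℝ) :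
    ∫ u : ℝ, (tent u : ℂ) * HH (I * l * u) * cexp (I * (l * T) * u)
      = ∫ t in Ioi (0 : ℝ), ((av t - 1 : ℝ) : ℂ) * (fejer (l * (T - t)) : ℂ) := by
  have hpos : ∀ᶠ σ : ℝ in 𝓝[>] (0 : ℝ), 0 < σ := self_mem_nhdsWithin
  have hlt : ∀ᶠ σ : ℝ in 𝓝[>] (0 : ℝ), σ ≤ 1 :=
    (Filter.Eventually.filter_mono nhdsWithin_le_nhds (eventually_le_nhds one_pos))
  have hre : ∀ (σ u : ℝ), ((σ : ℂ) + I * l * u).re = σ := by intro σ u; simp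
  have hre0 : ∀ (u : ℝ), (I * (l : ℂ) * u).re = 0 := by intro u; simp
  -- right side limit
  have R : Tendsto (fun σ : ℝ => ∫ t in Ioi (0 : ℝ),
      ((av t - 1 : ℝ) : ℂ) * cexp (-σ * t) * (fejer (l * (T - t)) : ℂ)) (𝓝[>] 0)
      (𝓝 (∫ t in Ioi (0 : ℝ), ((av t - 1 : ℝ) : ℂ) * (fejer (l * (T - t)) : ℂ))) := by
    have hb : Measurable fun t : ℝ => ((av t - 1 : ℝ) : ℂ) :=
      Complex.measurable_ofReal.comp (av_meas.sub_const 1)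
    have hf : Continuous fun t : ℝ => (fejer (l * (T - t)) : ℂ) := by
      have := fejer_cont; fun_prop
    refine tendsto_integral_filter_of_dominated_convergence
      (fun t => (Real.log 4 + 4) * fejer (l * (T - t))) ?_ ?_ ?_ ?_
    · refine Eventually.of_forall fun σ => ?_
      exact ((hb.mul (by fun_prop)).mul hf.measurable).aestronglyMeasurable
    · filter_upwards [hpos] with σ hσ
      rw [ae_restrict_iff' measurableSet_Ioi]
      refine Eventually.of_forall fun t ht => ?_
      rw [norm_mul, norm_mul, Complex.norm_real, Complex.norm_real,
        Real.norm_of_nonneg (fejer_nonneg _), Complex.norm_exp]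
      refine mul_le_mul_of_nonneg_right ?_ (fejer_nonneg _)
      have : Real.exp ((-(σ : ℂ) * t).re) ≤ 1 := by
        rw [Real.exp_le_one_iff]
        simp only [mem_Ioi] at ht
        simp; positivity
      calc _ ≤ (Real.log 4 + 4) * 1 :=
            mul_le_mul (b_bound t) this (Real.exp_pos _).le
              ((abs_nonneg _).trans (b_bound t))
        _ = _ := mul_one _
    · refine Integrable.integrableOn ?_
      refine Integrable.const_mul ?_ _
      exact ((fejer_integrable.comp_mul_left' hl.ne').comp_sub_left T)
    · refine Eventually.of_forall fun t => ?_
      have hc : Continuous fun σ : ℝ =>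
          ((av t - 1 : ℝ) : ℂ) * cexp (-σ * t) * (fejer (l * (T - t)) : ℂ) := by fun_prop
      have := (hc.tendsto 0).mono_left (nhdsWithin_le_nhds (s := Ioi 0))
      simpa using this
  -- left side limit
  have L : Tendsto (fun σ : ℝ => ∫ u : ℝ,
      (tent u : ℂ) * HH (σ + I * l * u) * cexp (I * (l * T) * u)) (𝓝[>] 0)
      (𝓝 (∫ u : ℝ, (tent u : ℂ) * HH (I * l * u) * cexp (I * (l * T) * u))) := by
    have hK : IsCompact ((fun p : ℝ × ℝ => (p.1 : ℂ) + I * l * p.2) ''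
        (Icc (0 : ℝ) 1 ×ˢ Icc (-1 : ℝ) 1)) :=
      (isCompact_Icc.prod isCompact_Icc).image (by fun_prop)
    obtain ⟨M, hM⟩ := hK.exists_bound_of_continuousOn (f := HH) (HH_cont.mono (by
      rintro _ ⟨p, hp, rfl⟩
      simp only [mem_ofPred_eq, hre]
      exact hp.1.1))
    refine tendsto_integral_filter_of_dominated_convergence
      (fun u => tent u * M) ?_ ?_ (tent_integrable.mul_const M) ?_
    · filter_upwards [hpos] with σ hσ
      have h1 : Continuous fun u : ℝ => HH (σ + I * l * u) :=
        HH_cont.comp_continuous (by fun_prop) (fun u => by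
          simp only [mem_ofPred_eq, hre]; exact hσ.le)
      have := tent_cont
      exact Continuous.aestronglyMeasurable (by fun_prop)
    · filter_upwards [hpos, hlt] with σ hσ hσ1
      refine Eventually.of_forall fun u => ?_
      rw [show I * ((l : ℂ) * T) * (u : ℂ) = ((l * T * u : ℝ) : ℂ) * I by
        push_cast; ring, norm_mul, Complex.norm_exp_ofReal_mul_I, mul_one, norm_mul,
        Complex.norm_real, Real.norm_of_nonneg (tent_nonneg u)]
      by_cases hu : u ∈ Ioc (-1 : ℝ) 1
      · exact mul_le_mul_of_nonneg_left
          (hM _ ⟨(σ, u), ⟨⟨hσ.le, hσ1⟩, Ioc_subset_Icc_self hu⟩, rfl⟩) (tent_nonneg u)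
      · simp [tent_eq_zero hu]
    · refine Eventually.of_forall fun u => ?_
      refine Tendsto.mul_const _ (Tendsto.const_mul _ ?_)
      have h1 := HH_cont (I * l * u) (by simp only [mem_ofPred_eq, hre0]; exact le_rfl)
      refine h1.tendsto.comp ?_
      refine tendsto_nhdsWithin_iff.mpr ⟨?_, ?_⟩
      · have hc : Continuous fun σ : ℝ => (σ : ℂ) + I * l * u := by fun_prop
        have := (hc.tendsto 0).mono_left (nhdsWithin_le_nhds (s := Ioi 0))
        simpa using this
      · filter_upwards [hpos] with σ hσ
        simp only [mem_ofPred_eq, hre]; exact hσ.le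
  refine tendsto_nhds_unique (L.congr' ?_) R
  filter_upwards [hpos] with σ hσ
  exact key_pos hσ T

lemma conv_tendsto {l : ℝ} (hl : 0 < l) :
    Tendsto (fun T : ℝ => ∫ t in Ioi (0 : ℝ), (av t - 1) * fejer (l * (T - t))) atTop (𝓝 0) := by
  have RL := Real.tendsto_integral_exp_smul_cocompact
    (fun u : ℝ => (tent u : ℂ) * HH (I * l * u))
  have hw : Tendsto (fun T : ℝ => -(l / (2 * Real.pi)) * T) atTop (cocompact ℝ) := by
    refine Tendsto.mono_right ?_ atBot_le_cocompact
    refine Tendsto.const_mul_atTop_of_neg ?_ tendsto_id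
    have := Real.pi_pos
    rw [neg_lt_zero]; positivity
  have h := RL.comp hw
  have h2 : Tendsto (fun T : ℝ =>
      ((∫ t in Ioi (0 : ℝ), (av t - 1) * fejer (l * (T - t)) : ℝ) : ℂ)) atTop (𝓝 0) := by
    refine h.congr fun T => ?_
    simp only [Function.comp]
    have e := key_zero hl T
    rw [← integral_complex_ofReal]
    simp only [Complex.ofReal_mul]
    rw [← e]
    refine integral_congr_ae (Eventually.of_forall fun u => ?_)
    simp only [Circle.smul_def, Real.fourierChar_apply, smul_eq_mul]
    rw [mul_comm]
    congr 2
    have := Real.pi_pos.ne'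
    push_cast
    have : (Real.pi : ℂ) ≠ 0 := by exact_mod_cast this
    field_simp
  exact (Complex.continuous_re.tendsto 0).comp h2

lemma smooth_tendsto {l : ℝ} (hl : 0 < l) :
    Tendsto (fun T : ℝ => ∫ v, av (T - v / l) * fejer v) atTop (𝓝 (∫ v, fejer v)) := by
  set c : ℝ → ℝ := (Ioi (0 : ℝ)).indicator (fun _ => 1) with hc
  have cmeas : Measurable c := measurable_const.indicator measurableSet_Ioi
  have cle : ∀ t, |c t| ≤ 1 := by
    intro t; by_cases h : t ∈ Ioi (0 : ℝ) <;> simp [hc, h]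
  have avint : ∀ T, Integrable fun v => av (T - v / l) * fejer v := by
    intro T
    refine fejer_integrable.bdd_mul (c := Real.log 4 + 4)
      (av_meas.comp (by fun_prop)).aestronglyMeasurable (Eventually.of_forall fun v => ?_)
    rw [Real.norm_of_nonneg (av_nonneg _)]
    exact av_le _
  have cint : ∀ T, Integrable fun v => c (T - v / l) * fejer v := by
    intro T
    refine fejer_integrable.bdd_mul (c := 1)
      (cmeas.comp (by fun_prop)).aestronglyMeasurable (Eventually.of_forall fun v => ?_)
    exact cle _
  have h1 : ∀ T : ℝ, ∫ t in Ioi (0 : ℝ), (av t - 1) * fejer (l * (T - t))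
      = l⁻¹ * ∫ v, (av (T - v / l) - c (T - v / l)) * fejer v := by
    intro T
    have e1 := integral_sub_left_eq_self
      (fun x => (av (T - (l * x) / l) - c (T - (l * x) / l)) * fejer (l * x)) volume T
    have e2 := Measure.integral_comp_mul_left
      (fun v => (av (T - v / l) - c (T - v / l)) * fejer v) l
    rw [abs_of_pos (inv_pos.mpr hl), smul_eq_mul] at e2
    rw [← e2, ← e1, ← integral_indicator measurableSet_Ioi]
    refine integral_congr_ae (Eventually.of_forall fun t => ?_)
    simp only
    rw [mul_div_cancel_left₀ _ hl.ne', sub_sub_cancel]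
    by_cases ht : t ∈ Ioi (0 : ℝ)
    · simp [hc, ht]
    · have : av t = 0 := av_neg (by simpa using ht)
      simp [hc, ht, this]
  have h2 := (conv_tendsto hl).const_mul l
  simp only [h1, mul_zero, mul_inv_cancel_left₀ hl.ne'] at h2
  have h3 : Tendsto (fun T : ℝ => ∫ v, c (T - v / l) * fejer v) atTop (𝓝 (∫ v, fejer v)) := by
    refine tendsto_integral_filter_of_dominated_convergence fejer ?_ ?_ fejer_integrable ?_
    · exact Eventually.of_forall fun T => (cint T).aestronglyMeasurable
    · refine Eventually.of_forall fun T => Eventually.of_forall fun v => ?_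
      rw [norm_mul, Real.norm_of_nonneg (fejer_nonneg v)]
      exact mul_le_of_le_one_left (fejer_nonneg v) (cle _)
    · refine Eventually.of_forall fun v => ?_
      refine tendsto_const_nhds.congr' ?_
      filter_upwards [eventually_gt_atTop (v / l)] with T hT
      have : T - v / l ∈ Ioi (0 : ℝ) := by simpa using hT
      simp [hc, this]
  have h4 := h2.add h3
  rw [zero_add] at h4
  refine h4.congr fun T => ?_
  rw [← integral_add _ (cint T)]
  · refine integral_congr_ae (Eventually.of_forall fun v => ?_)
    simp only; ring
  · refine ((avint T).sub (cint T)).congr (Eventually.of_forall fun v => ?_)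
    simp only [Pi.sub_apply]; ring

/-- truncated mass -/
noncomputable def JJ (R : ℝ) : ℝ := ∫ v in Icc (-R) R, fejer v

lemma JJ_tendsto : Tendsto JJ atTop (𝓝 (∫ v, fejer v)) := by
  have h := intervalIntegral_tendsto_integral fejer_integrable tendsto_neg_atTop_atBot
    (tendsto_id (α := ℝ) (x := atTop))
  refine h.congr' ?_
  filter_upwards [eventually_ge_atTop 0] with R hR
  rw [JJ, integral_Icc_eq_integral_Ioc, intervalIntegral.integral_of_le]
  · rfl
  · simp only [id]; linarith

lemma av_int {l : ℝ} (T : ℝ) : Integrable fun v => av (T - v / l) * fejer v := by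
  refine fejer_integrable.bdd_mul (c := Real.log 4 + 4)
    (av_meas.comp (by fun_prop)).aestronglyMeasurable (Eventually.of_forall fun v => ?_)
  rw [Real.norm_of_nonneg (av_nonneg _)]
  exact av_le _

lemma div_mem {l δ R v : ℝ} (hl : 0 < l) (hR : R = l * δ) (hv : v ∈ Icc (-R) R) :
    -δ ≤ v / l ∧ v / l ≤ δ := by
  rw [le_div_iff₀ hl, div_le_iff₀ hl]
  constructor <;> nlinarith [hv.1, hv.2]

lemma upper {l δ R T : ℝ} (hl : 0 < l) (hR : R = l * δ) :
    av (T - δ) * Real.exp (-(2 * δ)) * JJ R ≤ ∫ v, av (T - v / l) * fejer v := by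
  rw [JJ, ← integral_const_mul]
  refine le_trans ?_ (setIntegral_le_integral (s := Icc (-R) R) (av_int T)
    (Eventually.of_forall fun v => mul_nonneg (av_nonneg _) (fejer_nonneg _)))
  refine setIntegral_mono_on (fejer_integrable.const_mul _).integrableOn (av_int T).integrableOn
    measurableSet_Icc fun v hv => ?_
  refine mul_le_mul_of_nonneg_right ?_ (fejer_nonneg _)
  have h := div_mem hl hR hv
  have h1 := av_mono (show T - δ ≤ T - v / l by linarith [h.2])
  have h2 : Real.exp (T - v / l - (T - δ)) ≤ Real.exp (2 * δ) :=
    Real.exp_le_exp.mpr (by linarith [h.1])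
  rw [Real.exp_neg, ← div_eq_mul_inv, div_le_iff₀ (Real.exp_pos _)]
  exact h1.trans (mul_le_mul_of_nonneg_left h2 (av_nonneg _))

lemma lower {l δ R T : ℝ} (hl : 0 < l) (hR : R = l * δ) :
    ∫ v, av (T - v / l) * fejer v ≤ av (T + δ) * Real.exp (2 * δ) * (∫ v, fejer v)
      + (Real.log 4 + 4) * ((∫ v, fejer v) - JJ R) := by
  have hC : 0 ≤ Real.log 4 + 4 := (av_nonneg 0).trans (av_le 0)
  have hcompl : (∫ v, fejer v) - JJ R = ∫ v in (Icc (-R) R)ᶜ, fejer v := by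
    rw [JJ, ← integral_add_compl (measurableSet_Icc (a := -R) (b := R)) fejer_integrable]; ring
  rw [hcompl, ← integral_add_compl (measurableSet_Icc (a := -R) (b := R)) (av_int T)]
  refine add_le_add ?_ ?_
  · have hk : 0 ≤ av (T + δ) * Real.exp (2 * δ) := mul_nonneg (av_nonneg _) (Real.exp_pos _).le
    rw [← integral_const_mul]
    refine le_trans ?_ (setIntegral_le_integral (s := Icc (-R) R) (fejer_integrable.const_mul _)
      (Eventually.of_forall fun v => mul_nonneg hk (fejer_nonneg _)))
    refine setIntegral_mono_on (av_int T).integrableOn (fejer_integrable.const_mul _).integrableOn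
      measurableSet_Icc fun v hv => ?_
    refine mul_le_mul_of_nonneg_right ?_ (fejer_nonneg _)
    have h := div_mem hl hR hv
    have h1 := av_mono (show T - v / l ≤ T + δ by linarith [h.1])
    have h2 : Real.exp (T + δ - (T - v / l)) ≤ Real.exp (2 * δ) :=
      Real.exp_le_exp.mpr (by linarith [h.2])
    exact h1.trans (mul_le_mul_of_nonneg_left h2 (av_nonneg _))
  · rw [← integral_const_mul]
    refine setIntegral_mono_on (av_int T).integrableOn (fejer_integrable.const_mul _).integrableOn
      measurableSet_Icc.compl fun v hv => ?_
    exact mul_le_mul_of_nonneg_right (av_le _) (fejer_nonneg _)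

lemma exists_delta (k : ℝ) : ∀ b > k, ∃ δ > 0, k * Real.exp (2 * δ) < b := by
  intro b hb
  have hc : Continuous fun δ : ℝ => k * Real.exp (2 * δ) := by fun_prop
  have h := (hc.tendsto 0).mono_left (nhdsWithin_le_nhds (s := Ioi 0))
  simp only [mul_zero, Real.exp_zero, mul_one] at h
  have h2 : ∀ᶠ δ : ℝ in 𝓝[>] (0 : ℝ), 0 < δ := self_mem_nhdsWithin
  obtain ⟨δ, h3, h4⟩ := ((h.eventually_lt_const hb).and h2).exists
  exact ⟨δ, h4, h3⟩

lemma av_tendsto : Tendsto av atTop (𝓝 1) := by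
  have hI := fejer_int_pos
  rw [tendsto_order]
  constructor
  · intro k hk
    obtain ⟨δ, hδ, hδk⟩ := exists_delta k 1 hk
    have t1 : Tendsto (fun R => k * Real.exp (2 * δ) * (∫ v, fejer v)
        + (Real.log 4 + 4) * ((∫ v, fejer v) - JJ R)) atTop
        (𝓝 (k * Real.exp (2 * δ) * (∫ v, fejer v)
        + (Real.log 4 + 4) * ((∫ v, fejer v) - ∫ v, fejer v))) :=
      ((JJ_tendsto.const_sub _).const_mul _).const_add _
    have hlt : k * Real.exp (2 * δ) * (∫ v, fejer v)
        + (Real.log 4 + 4) * ((∫ v, fejer v) - ∫ v, fejer v) < ∫ v, fejer v := by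
      rw [sub_self, mul_zero, add_zero]
      exact mul_lt_of_lt_one_left hI hδk
    obtain ⟨R, hR1, hR0⟩ := ((t1.eventually_lt_const hlt).and (eventually_gt_atTop 0)).exists
    have hl : 0 < R / δ := div_pos hR0 hδ
    have hev := (smooth_tendsto hl).eventually_const_lt hR1
    have hev2 := (tendsto_atTop_add_const_right atTop (-δ) tendsto_id).eventually hev
    filter_upwards [hev2] with T hT
    have h := lower (T := T + -δ) hl (show R = R / δ * δ by field_simp)
    have h3 := lt_of_lt_of_le hT h
    simp only [neg_add_cancel_right] at h3
    have h4 := lt_of_add_lt_add_right h3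
    have h5 := lt_of_mul_lt_mul_right h4 hI.le
    exact lt_of_mul_lt_mul_right h5 (Real.exp_pos _).le
  · intro k hk
    obtain ⟨δ, hδ, hδk⟩ := exists_delta 1 k hk
    rw [one_mul] at hδk
    have t1 : Tendsto (fun R => k * Real.exp (-(2 * δ)) * JJ R) atTop
        (𝓝 (k * Real.exp (-(2 * δ)) * ∫ v, fejer v)) := JJ_tendsto.const_mul _
    have hlt : ∫ v, fejer v < k * Real.exp (-(2 * δ)) * ∫ v, fejer v := by
      refine lt_mul_of_one_lt_left hI ?_
      rw [Real.exp_neg, ← div_eq_mul_inv, one_lt_div (Real.exp_pos _)]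
      exact hδk
    obtain ⟨R, ⟨hR1, hJ⟩, hR0⟩ := (((t1.eventually_const_lt hlt).and
      (JJ_tendsto.eventually_const_lt hI)).and (eventually_gt_atTop 0)).exists
    have hl : 0 < R / δ := div_pos hR0 hδ
    have hev := (smooth_tendsto hl).eventually_lt_const hR1
    have hev2 := (tendsto_atTop_add_const_right atTop δ tendsto_id).eventually hev
    filter_upwards [hev2] with T hT
    have h := upper (T := T + δ) hl (show R = R / δ * δ by field_simp)
    have h3 := lt_of_le_of_lt h hT
    simp only [add_sub_cancel_right] at h3
    have h5 := lt_of_mul_lt_mul_right h3 hJ.le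
    exact lt_of_mul_lt_mul_right h5 (Real.exp_pos _).le

lemma psi_tendsto : Tendsto (fun x : ℝ => Chebyshev.psi x / x) atTop (𝓝 1) := by
  refine (av_tendsto.comp Real.tendsto_log_atTop).congr' ?_
  filter_upwards [eventually_gt_atTop 0] with x hx
  simp only [Function.comp, av]
  rw [Real.exp_neg, Real.exp_log hx, div_eq_mul_inv]

lemma theta_tendsto : Tendsto (fun x : ℝ => Chebyshev.theta x / x) atTop (𝓝 1) := by
  have h1 : (fun x : ℝ => √x) =o[atTop] fun x : ℝ => x := by
    refine Asymptotics.isLittleO_of_tendsto' ?_ ?_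
    · filter_upwards [eventually_gt_atTop 0] with x hx h
      exact absurd h hx.ne'
    · refine Tendsto.congr' (f₁ := fun x ↦ (√x)⁻¹) ?_
        Real.tendsto_sqrt_atTop.inv_tendsto_atTop
      filter_upwards [eventually_gt_atTop 0] with x hx
      rw [Real.sqrt_div_self', one_div]
  have h2 := (Chebyshev.isBigO_psi_sub_theta_sqrt.trans_isLittleO h1).tendsto_div_nhds_zero
  have h3 := psi_tendsto.sub h2
  rw [sub_zero] at h3
  refine h3.congr fun x => ?_
  simp only [Pi.sub_apply]; ring

lemma pi_tendsto : Tendsto (fun x : ℝ => (Nat.primeCounting ⌊x⌋₊ : ℝ) * Real.log x / x)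
    atTop (𝓝 1) := by
  have h1 : (fun x : ℝ => x / Real.log x ^ 2) =o[atTop] fun x : ℝ => x / Real.log x := by
    refine Asymptotics.isLittleO_of_tendsto' ?_ ?_
    · filter_upwards [eventually_gt_atTop 1] with x hx h
      have := Real.log_pos hx
      have : 0 < x / Real.log x := by positivity
      linarith
    · refine Tendsto.congr' (f₁ := fun x ↦ (Real.log x)⁻¹) ?_
        Real.tendsto_log_atTop.inv_tendsto_atTop
      filter_upwards [eventually_gt_atTop 1] with x hx
      have := Real.log_pos hx
      field_simp
  have h2 := (Chebyshev.primeCounting_sub_theta_div_log_isBigO.trans_isLittleO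
    h1).tendsto_div_nhds_zero
  have h3 := h2.add theta_tendsto
  rw [zero_add] at h3
  refine h3.congr' ?_
  filter_upwards [eventually_gt_atTop 1] with x hx
  have := Real.log_pos hx
  field_simp
  ring

end PNTaux

theorem primeCounting_asymptotic :
    Tendsto (fun n : ℕ => (Nat.primeCounting n : ℝ) * Real.log n / n)
      atTop (𝓝 1) := by
  refine (PNTaux.pi_tendsto.comp tendsto_natCast_atTop_atTop).congr fun n => ?_
  simp
end

section
/- Let p(n) denote the n-th prime number. Then the limit as n → ∞ of p(n) / (n · log n) equals 1; that is, p(n) ~ n log n. -/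
open Filter Topology

/-- `p n` is the `n`-th prime number, so `p 1 = 2`, `p 2 = 3`, … -/
noncomputable def p (n : ℕ) : ℕ := Nat.nth Nat.Prime (n - 1)


namespace PNT
open MeasureTheory

/-- Fejér kernel. -/
noncomputable def K (v : ℝ) : ℝ := 2 * (1 - Real.cos v) / v ^ 2

lemma K_nonneg (v : ℝ) : 0 ≤ K v := by
  unfold K
  have := Real.cos_le_one v
  apply div_nonneg <;> nlinarith [sq_nonneg v]

lemma K_meas : Measurable K := by
  unfold K
  fun_prop

lemma K_le (v : ℝ) : K v ≤ 5 * (1 + v ^ 2)⁻¹ := by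
  unfold K
  rcases eq_or_ne v 0 with rfl | hv
  · norm_num
  have h1 := Real.one_sub_sq_div_two_le_cos (x := v)
  have h2 := Real.neg_one_le_cos v
  have hv2 : 0 < v ^ 2 := by positivity
  rw [← div_eq_mul_inv, div_le_div_iff₀ hv2 (by positivity)]
  nlinarith

lemma K_int : Integrable K := by
  refine (integrable_inv_one_add_sq.const_mul 5).mono' K_meas.aestronglyMeasurable ?_
  refine Eventually.of_forall fun v => ?_
  rw [Real.norm_eq_abs, abs_of_nonneg (K_nonneg v)]
  exact K_le v

lemma K_pos : 0 < ∫ v, K v := by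
  rw [integral_pos_iff_support_of_nonneg K_nonneg K_int]
  have : Set.Ioo (0 : ℝ) 1 ⊆ Function.support K := by
    intro v hv
    have h1 : Real.cos v < 1 := by
      rw [← Real.cos_zero]
      apply Real.cos_lt_cos_of_nonneg_of_le_pi le_rfl _ hv.1
      linarith [hv.2, Real.pi_gt_three]
    have : 0 < K v := by
      unfold K
      have := hv.1
      apply div_pos <;> [linarith; positivity]
    exact this.ne'
  refine lt_of_lt_of_le ?_ (measure_mono this)
  simp

lemma K_fourier {v : ℝ} (hv : v ≠ 0) :
    ∫ t in Set.Ioc (-1 : ℝ) 1, ((1 - |t| : ℝ) : ℂ) * Complex.exp (Complex.I * t * v) = (K v : ℂ) := by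
  rw [← intervalIntegral.integral_of_le (by norm_num)]
  have hcont : Continuous fun t : ℝ => ((1 - |t| : ℝ) : ℂ) * Complex.exp (Complex.I * t * v) := by
    fun_prop
  rw [← intervalIntegral.integral_add_adjacent_intervals (b := 0)
    (hcont.intervalIntegrable _ _) (hcont.intervalIntegrable _ _)]
  set c : ℂ := Complex.I * v with hc
  have hc0 : c ≠ 0 := by simp [hc, hv]
  have e1 : ∫ t in (-1 : ℝ)..0, ((1 - |t| : ℝ) : ℂ) * Complex.exp (Complex.I * t * v)
      = ∫ t in (-1 : ℝ)..0, (1 + (t:ℂ)) * Complex.exp (c * t) := by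
    apply intervalIntegral.integral_congr
    intro t ht
    rw [Set.uIcc_of_le (by norm_num)] at ht
    simp only
    rw [abs_of_nonpos ht.2, hc]
    push_cast
    ring_nf
  have e2 : ∫ t in (0 : ℝ)..1, ((1 - |t| : ℝ) : ℂ) * Complex.exp (Complex.I * t * v)
      = ∫ t in (0 : ℝ)..1, (1 - (t:ℂ)) * Complex.exp (c * t) := by
    apply intervalIntegral.integral_congr
    intro t ht
    rw [Set.uIcc_of_le (by norm_num)] at ht
    simp only
    rw [abs_of_nonneg ht.1, hc]
    push_cast
    ring_nf
  have dexp : ∀ t : ℝ, HasDerivAt (fun t : ℝ => Complex.exp (c * t)) (Complex.exp (c * t) * c) t := by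
    intro t
    have := ((Complex.ofRealCLM.hasDerivAt (x := t)).const_mul c).cexp
    simpa using this
  have dt : ∀ t : ℝ, HasDerivAt (fun t : ℝ => (t : ℂ)) 1 t := fun t => by
    simpa using (hasDerivAt_id t).ofReal_comp
  have f1 : ∫ t in (-1 : ℝ)..0, (1 + (t:ℂ)) * Complex.exp (c * t) = _ :=
    intervalIntegral.integral_eq_sub_of_hasDerivAt
    (f := fun t : ℝ => (1 + (t:ℂ)) * Complex.exp (c * t) / c - Complex.exp (c * t) / c ^ 2)
    (fun t _ => by
      refine ((((dt t).const_add 1).mul (dexp t)).div_const c |>.sub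
        ((dexp t).div_const (c ^ 2))).congr_deriv ?_
      field_simp
      ring) (by apply Continuous.intervalIntegrable; fun_prop)
  have f2 : ∫ t in (0 : ℝ)..1, (1 - (t:ℂ)) * Complex.exp (c * t) = _ :=
    intervalIntegral.integral_eq_sub_of_hasDerivAt
    (f := fun t : ℝ => (1 - (t:ℂ)) * Complex.exp (c * t) / c + Complex.exp (c * t) / c ^ 2)
    (fun t _ => by
      refine ((((dt t).const_sub 1).mul (dexp t)).div_const c |>.add
        ((dexp t).div_const (c ^ 2))).congr_deriv ?_
      field_simp
      ring) (by apply Continuous.intervalIntegrable; fun_prop)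
  rw [e1, e2, f1, f2]
  unfold K
  push_cast
  rw [Complex.cos]
  have hI : (v : ℂ) * Complex.I = c := by rw [hc]; ring
  have hI' : -(v : ℂ) * Complex.I = -c := by rw [hc]; ring
  have hc2 : c ^ 2 = - (v:ℂ) ^ 2 := by rw [hc, mul_pow]; simp
  have hv' : (v : ℂ) ≠ 0 := by exact_mod_cast hv
  rw [hI, hI', hc2]
  simp only [mul_zero, mul_one, Complex.exp_zero, mul_neg]
  field_simp
  ring


/-- Hypotheses of the Tauberian theorem. -/
structure Hyp (B : ℝ → ℝ) (C : ℝ) (G : ℂ → ℂ) : Prop where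
  meas : Measurable B
  nonneg : ∀ u, 0 ≤ B u
  le : ∀ u, B u ≤ C
  neg : ∀ u < 0, B u = 0
  cont : ContinuousOn G {z | 0 ≤ z.re}
  lap : ∀ z : ℂ, 0 < z.re → ∫ u in Set.Ioi (0 : ℝ), ((B u - 1 : ℝ) : ℂ) * Complex.exp (-z * u) = G z
  mono : ∀ u v, u ≤ v → B u * Real.exp u ≤ B v * Real.exp v

variable {B : ℝ → ℝ} {C : ℝ} {G : ℂ → ℂ}

lemma Hyp.abs_le (h : Hyp B C G) (u : ℝ) : |B u - 1| ≤ C + 1 := by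
  have := h.nonneg u
  have := h.le u
  rw [_root_.abs_le]; constructor <;> linarith

lemma stepA (h : Hyp B C G) {σ l : ℝ} (hσ : 0 < σ) (hl : 0 < l) (y : ℝ) :
    ∫ t in Set.Ioc (-1 : ℝ) 1, ((1 - |t| : ℝ) : ℂ) * Complex.exp (Complex.I * t * (l * y)) *
        G (σ + Complex.I * (l * t)) =
    ∫ u in Set.Ioi (0 : ℝ), (((B u - 1) * Real.exp (-σ * u) * K (l * (y - u)) : ℝ) : ℂ) := by
  have hswap := integral_integral_swap (μ := volume.restrict (Set.Ioc (-1 : ℝ) 1))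
    (ν := volume.restrict (Set.Ioi (0 : ℝ)))
    (f := fun t u => ((1 - |t| : ℝ) : ℂ) * Complex.exp (Complex.I * t * (l * y)) *
      (((B u - 1 : ℝ) : ℂ) * Complex.exp (-(σ + Complex.I * (l * t)) * u))) ?_
  · refine Eq.trans ?_ (hswap.trans ?_)
    rotate_left
    · apply integral_congr_ae
      have : ∀ᵐ u ∂(volume.restrict (Set.Ioi (0 : ℝ))), u ≠ y :=
        ae_restrict_of_ae (Measure.ae_ne volume y)
      filter_upwards [this] with u hu
      have hne : l * (y - u) ≠ 0 := mul_ne_zero hl.ne' (sub_ne_zero.2 hu.symm)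
      push_cast
      rw [← K_fourier hne, ← integral_const_mul]
      congr 1
      ext t
      have : Complex.exp (-(σ + Complex.I * (l * t)) * u) * Complex.exp (Complex.I * t * (l * y))
        = Complex.exp (-σ * u) * Complex.exp (Complex.I * t * (l * (y - u) : ℝ)) := by
        rw [← Complex.exp_add, ← Complex.exp_add]
        congr 1
        push_cast
        ring
      push_cast at this ⊢
      linear_combination (1 - ((|t| : ℝ) : ℂ)) * ((B u : ℂ) - 1) * this
    · congr 1
      ext t
      rw [integral_const_mul, h.lap _ (by simpa using hσ)]
  · have hi : Integrable (fun u : ℝ => (C + 1) * Real.exp (-σ * u))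
        (volume.restrict (Set.Ioi (0 : ℝ))) := by
      have := integrableOn_exp_mul_Ioi (a := -σ) (by linarith) 0
      exact this.const_mul _
    have h1 : Integrable (fun _ : ℝ => (1 : ℝ)) (volume.restrict (Set.Ioc (-1 : ℝ) 1)) :=
      integrable_const _
    have hm : Measurable (fun p : ℝ × ℝ => B p.2) := h.meas.comp measurable_snd
    refine (h1.mul_prod hi).mono' ?_ ?_
    · apply Measurable.aestronglyMeasurable
      simp only [Function.uncurry_def]
      apply Measurable.mul
      · apply Continuous.measurable
        fun_prop
      · apply Measurable.mul
        · exact Complex.measurable_ofReal.comp (hm.sub_const 1)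
        · apply Continuous.measurable
          fun_prop
    · have hmem : ∀ᵐ p ∂((volume.restrict (Set.Ioc (-1 : ℝ) 1)).prod
          (volume.restrict (Set.Ioi (0 : ℝ)))), p ∈ Set.Ioc (-1 : ℝ) 1 ×ˢ Set.Ioi (0 : ℝ) := by
        rw [Measure.prod_restrict]
        exact ae_restrict_mem (measurableSet_Ioc.prod measurableSet_Ioi)
      filter_upwards [hmem] with p hp
      have hp1 := hp.1
      simp only [Function.uncurry, norm_mul, Complex.norm_exp, Complex.norm_real]
      have e1 : (Complex.I * p.1 * (l * y)).re = 0 := by simp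
      have e2 : (-(σ + Complex.I * (l * p.1)) * p.2).re = -σ * p.2 := by simp
      rw [e1, e2, Real.exp_zero, mul_one]
      have a1 : |p.1| ≤ 1 := abs_le.2 ⟨hp1.1.le, hp1.2⟩
      have a2 : ‖1 - |p.1|‖ ≤ 1 := by
        rw [Real.norm_eq_abs, abs_of_nonneg (by linarith)]
        linarith [abs_nonneg p.1]
      gcongr
      exact h.abs_le _

lemma K_comp_int {l : ℝ} (hl : 0 < l) (y : ℝ) : Integrable (fun u => K (l * (y - u))) := by
  have h1 : Integrable (fun u => K (l * u)) := K_int.comp_mul_left' hl.ne'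
  exact h1.comp_sub_left y

lemma stepB (h : Hyp B C G) {l : ℝ} (hl : 0 < l) (y : ℝ) :
    ∫ t in Set.Ioc (-1 : ℝ) 1, ((1 - |t| : ℝ) : ℂ) * Complex.exp (Complex.I * t * (l * y)) *
        G (Complex.I * (l * t)) =
    ∫ u in Set.Ioi (0 : ℝ), (((B u - 1) * K (l * (y - u)) : ℝ) : ℂ) := by
  have hne : (𝓝[>] (0 : ℝ)).NeBot := inferInstance
  have hpos : ∀ᶠ σ : ℝ in 𝓝[>] 0, 0 < σ := eventually_mem_nhdsWithin
  have hlt : ∀ᶠ σ : ℝ in 𝓝[>] 0, σ < 1 := nhdsWithin_le_nhds (eventually_lt_nhds one_pos)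
  have gcont : ContinuousOn (fun p : ℝ × ℝ => G (p.1 + Complex.I * (l * p.2)))
      (Set.Icc 0 1 ×ˢ Set.Icc (-1) 1) := by
    apply h.cont.comp (by fun_prop)
    intro p hp
    simpa using hp.1.1
  obtain ⟨M, hM⟩ := (isCompact_Icc.prod isCompact_Icc).exists_bound_of_continuousOn gcont
  have gc1 : ∀ t : ℝ, ContinuousOn (fun σ : ℝ => G (σ + Complex.I * (l * t))) (Set.Ici 0) := by
    intro t
    apply h.cont.comp (by fun_prop)
    intro s hs
    simpa using hs
  have gc2 : ∀ σ : ℝ, 0 ≤ σ → Continuous (fun t : ℝ => G (σ + Complex.I * (l * t))) := by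
    intro σ hσ
    rw [← continuousOn_univ]
    apply h.cont.comp (by fun_prop)
    intro t _
    simpa using hσ
  have L : Tendsto (fun σ : ℝ => ∫ t in Set.Ioc (-1 : ℝ) 1, ((1 - |t| : ℝ) : ℂ) *
      Complex.exp (Complex.I * t * (l * y)) * G (σ + Complex.I * (l * t))) (𝓝[>] 0)
      (𝓝 (∫ t in Set.Ioc (-1 : ℝ) 1, ((1 - |t| : ℝ) : ℂ) *
        Complex.exp (Complex.I * t * (l * y)) * G (Complex.I * (l * t)))) := by
    apply tendsto_integral_filter_of_dominated_convergence (fun _ => M)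
    · filter_upwards [hpos] with σ hσ
      have := gc2 σ hσ.le
      apply Continuous.aestronglyMeasurable
      exact Continuous.mul (by fun_prop) this
    · filter_upwards [hpos, hlt] with σ h0 h1
      filter_upwards [ae_restrict_mem measurableSet_Ioc] with t ht
      simp only [norm_mul, Complex.norm_exp, Complex.norm_real]
      have e1 : (Complex.I * t * (l * y)).re = 0 := by simp
      rw [e1, Real.exp_zero, mul_one]
      have a1 : |t| ≤ 1 := abs_le.2 ⟨ht.1.le, ht.2⟩
      have a2 : ‖1 - |t|‖ ≤ 1 := by
        rw [Real.norm_eq_abs, abs_of_nonneg (by linarith)]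
        linarith [abs_nonneg t]
      have a3 := hM (σ, t) ⟨⟨h0.le, h1.le⟩, ⟨ht.1.le, ht.2⟩⟩
      calc _ ≤ 1 * ‖G (σ + Complex.I * (l * t))‖ := by gcongr
        _ ≤ M := by simpa using a3
    · exact integrable_const _
    · refine Eventually.of_forall fun t => Tendsto.const_mul _ ?_
      have := (gc1 t 0 (Set.mem_Ici.2 le_rfl)).mono Set.Ioi_subset_Ici_self
      simpa [ContinuousWithinAt] using this
  have R : Tendsto (fun σ : ℝ =>
      ∫ u in Set.Ioi (0 : ℝ), (((B u - 1) * Real.exp (-σ * u) * K (l * (y - u)) : ℝ) : ℂ)) (𝓝[>] 0)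
      (𝓝 (∫ u in Set.Ioi (0 : ℝ), (((B u - 1) * K (l * (y - u)) : ℝ) : ℂ))) := by
    have hBm := h.meas
    have hKm := K_meas
    apply tendsto_integral_filter_of_dominated_convergence (fun u => (C + 1) * K (l * (y - u)))
    · refine Eventually.of_forall fun σ => ?_
      apply Measurable.aestronglyMeasurable
      fun_prop
    · filter_upwards [hpos] with σ h0
      filter_upwards [ae_restrict_mem measurableSet_Ioi] with u hu
      have hu' : 0 < u := hu
      rw [Complex.norm_real, norm_mul, norm_mul, Real.norm_eq_abs, Real.norm_eq_abs,
        Real.norm_eq_abs, abs_of_nonneg (K_nonneg _), Real.abs_exp]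
      have : Real.exp (-σ * u) ≤ 1 := by
        rw [Real.exp_le_one_iff]; nlinarith
      have h2 := h.abs_le u
      have := K_nonneg (l * (y - u))
      calc _ ≤ (C + 1) * 1 * K (l * (y - u)) := by
            gcongr
            exact (abs_nonneg _).trans h2
        _ = _ := by ring
    · exact ((K_comp_int hl y).const_mul _).restrict
    · refine Eventually.of_forall fun u => ?_
      have : Continuous fun σ : ℝ => (((B u - 1) * Real.exp (-σ * u) * K (l * (y - u)) : ℝ) : ℂ) := by
        fun_prop
      have := (this.tendsto 0).mono_left (nhdsWithin_le_nhds (s := Set.Ioi 0))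
      simpa using this
  refine tendsto_nhds_unique L (R.congr' ?_)
  filter_upwards [hpos] with σ hσ
  exact (stepA h hσ hl y).symm

lemma stepC (h : Hyp B C G) {l : ℝ} (hl : 0 < l) :
    Tendsto (fun y => ∫ u in Set.Ioi (0 : ℝ), (B u - 1) * K (l * (y - u))) atTop (𝓝 0) := by
  have RL := Real.tendsto_integral_exp_smul_cocompact
    ((Set.Ioc (-1 : ℝ) 1).indicator fun t => ((1 - |t| : ℝ) : ℂ) * G (Complex.I * (l * t)))
  have hw : Tendsto (fun y : ℝ => -(l * y / (2 * Real.pi))) atTop (cocompact ℝ) := by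
    have : Tendsto (fun y : ℝ => -(l * y / (2 * Real.pi))) atTop atBot := by
      apply tendsto_neg_atTop_atBot.comp
      apply Tendsto.atTop_div_const (by positivity)
      exact tendsto_id.const_mul_atTop hl
    exact this.mono_right atBot_le_cocompact
  have := RL.comp hw
  have h2 : Tendsto (fun y => ∫ u in Set.Ioi (0 : ℝ), (((B u - 1) * K (l * (y - u)) : ℝ) : ℂ))
      atTop (𝓝 0) := by
    refine this.congr fun y => ?_
    rw [← stepB h hl y, ← integral_indicator measurableSet_Ioc]
    simp only [Function.comp]
    congr 1
    ext t
    by_cases ht : t ∈ Set.Ioc (-1 : ℝ) 1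
    · simp only [Set.indicator_of_mem ht, Circle.smul_def, Real.fourierChar_apply, smul_eq_mul]
      have : (2 * Real.pi * -(t * -(l * y / (2 * Real.pi))) : ℝ) = t * (l * y) := by
        have := Real.pi_ne_zero
        field_simp
      rw [this]
      push_cast
      ring_nf
    · simp [Set.indicator_of_notMem ht]
  have h3 := (Complex.continuous_re.tendsto 0).comp h2
  refine h3.congr fun y => ?_
  simp only [Function.comp]
  rw [integral_complex_ofReal, Complex.ofReal_re]

/-- the smoothed function tends to the mass of the kernel -/
lemma stepD (h : Hyp B C G) {l : ℝ} (hl : 0 < l) :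
    Tendsto (fun y => ∫ v, B (y - v / l) * K v) atTop (𝓝 (∫ v, K v)) := by
  have key : ∀ y, ∫ v, B (y - v / l) * K v =
      l * (∫ u in Set.Ioi (0 : ℝ), (B u - 1) * K (l * (y - u))) +
        ∫ v in Set.Iio (l * y), K v := by
    intro y
    have i1 : Integrable (fun u => (B u - 1) * K (l * (y - u))) := by
      refine ((K_comp_int hl y).bdd_mul (c := C + 1) (h.meas.sub_const 1).aestronglyMeasurable ?_)
      exact Eventually.of_forall h.abs_le
    have i2 := K_comp_int hl y
    have c1 : ∫ v, B (y - v / l) * K v = l * ∫ u, B u * K (l * (y - u)) := by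
      rw [← integral_sub_left_eq_self (fun u => B u * K (l * (y - u))) _ y]
      simp only [sub_sub_cancel]
      have := Measure.integral_comp_mul_left (fun v => B (y - v / l) * K v) l
      simp only [mul_div_cancel_left₀ _ hl.ne'] at this
      rw [this, abs_of_pos (by positivity), smul_eq_mul, mul_inv_cancel_left₀ hl.ne']
    have c2 : ∫ v in Set.Iio (l * y), K v = l * ∫ u in Set.Ioi (0 : ℝ), K (l * (y - u)) := by
      rw [← integral_indicator measurableSet_Iio, ← integral_indicator measurableSet_Ioi]
      rw [← integral_sub_left_eq_self (fun u => (Set.Ioi (0 : ℝ)).indicator _ u) _ y]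
      have := Measure.integral_comp_mul_left ((Set.Iio (l * y)).indicator K) l
      rw [abs_of_pos (by positivity), smul_eq_mul] at this
      rw [eq_comm, ← eq_inv_mul_iff_mul_eq₀ hl.ne', ← this]
      congr 1
      ext v
      simp only [Set.indicator, Set.mem_Ioi, Set.mem_Iio, sub_sub_cancel, sub_pos,
        mul_lt_mul_iff_right₀ hl]
    have c3 : ∫ u, B u * K (l * (y - u)) = ∫ u in Set.Ioi (0 : ℝ), B u * K (l * (y - u)) := by
      rw [← integral_Ici_eq_integral_Ioi, eq_comm]
      apply setIntegral_eq_integral_of_forall_compl_eq_zero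
      intro u hu
      rw [h.neg u (by simpa using hu), zero_mul]
    rw [c1, c2, c3, ← mul_add, ← integral_add i1.restrict i2.restrict]
    congr 2
    ext u
    ring
  simp only [key]
  rw [← zero_add (∫ v, K v)]
  apply Tendsto.add
  · simpa using (stepC h hl).const_mul l
  · have hly : Tendsto (fun y : ℝ => l * y) atTop atTop := tendsto_id.const_mul_atTop hl
    have : Tendsto (fun b => ∫ v in Set.Iio b, K v) atTop (𝓝 (∫ v, K v)) := by
      simp only [← integral_Iic_eq_integral_Iio]
      exact (aecover_Iic tendsto_id).integral_tendsto_of_countably_generated K_int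
    exact this.comp hly

lemma cR_tendsto : Tendsto (fun R : ℝ => ∫ v in Set.Icc (-R) R, K v) atTop (𝓝 (∫ v, K v)) :=
  (aecover_Icc tendsto_neg_atTop_atBot tendsto_id).integral_tendsto_of_countably_generated K_int

lemma BK_int (h : Hyp B C G) (l y : ℝ) : Integrable (fun v => B (y - v / l) * K v) := by
  have hm := h.meas
  refine K_int.bdd_mul (c := C) (Measurable.aestronglyMeasurable (by fun_prop)) ?_
  refine Eventually.of_forall fun v => ?_
  rw [Real.norm_eq_abs, abs_of_nonneg (h.nonneg _)]
  exact h.le _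

lemma upper (h : Hyp B C G) {R : ℝ} (hR : 0 < R) (y : ℝ) :
    B y * Real.exp (-(2 / R)) * ∫ v in Set.Icc (-R) R, K v ≤
      ∫ v, B ((y + 1 / R) - v / R ^ 2) * K v := by
  calc _ = ∫ v in Set.Icc (-R) R, B y * Real.exp (-(2 / R)) * K v := (integral_const_mul _ _).symm
    _ ≤ ∫ v in Set.Icc (-R) R, B ((y + 1 / R) - v / R ^ 2) * K v := by
      apply setIntegral_mono_on (K_int.const_mul _).integrableOn (BK_int h _ _).integrableOn
        measurableSet_Icc
      intro v hv
      apply mul_le_mul_of_nonneg_right _ (K_nonneg v)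
      set w := (y + 1 / R) - v / R ^ 2 with hw
      have e1 : v / R ^ 2 ≤ 1 / R := by
        rw [div_le_div_iff₀ (by positivity) hR]; nlinarith [hv.2]
      have e2 : - (1 / R) ≤ v / R ^ 2 := by
        rw [neg_le_iff_add_nonneg, show v / R ^ 2 + 1 / R = (v + R) / R ^ 2 by field_simp]
        have := hv.1
        apply div_nonneg <;> nlinarith
      have e3 : 2 / R = 1 / R + 1 / R := by ring
      have hyw : y ≤ w := by linarith
      have := h.mono y w hyw
      have h2 : B y * Real.exp (y - w) ≤ B w := by
        rw [Real.exp_sub, ← mul_div_assoc, div_le_iff₀ (Real.exp_pos _)]; exact this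
      refine le_trans ?_ h2
      apply mul_le_mul_of_nonneg_left _ (h.nonneg y)
      apply Real.exp_le_exp.2
      linarith
    _ ≤ _ := setIntegral_le_integral (BK_int h _ _)
      (Eventually.of_forall fun v => mul_nonneg (h.nonneg _) (K_nonneg v))

lemma lower (h : Hyp B C G) {R : ℝ} (hR : 0 < R) (y : ℝ) :
    ∫ v, B ((y - 1 / R) - v / R ^ 2) * K v ≤ B y * Real.exp (2 / R) * (∫ v, K v) +
      C * ((∫ v, K v) - ∫ v in Set.Icc (-R) R, K v) := by
  have hs := integral_add_compl (measurableSet_Icc (a := -R) (b := R)) K_int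
  rw [← integral_add_compl (measurableSet_Icc (a := -R) (b := R)) (BK_int h _ _)]
  apply add_le_add
  · calc _ ≤ ∫ v in Set.Icc (-R) R, B y * Real.exp (2 / R) * K v := by
          apply setIntegral_mono_on (BK_int h _ _).integrableOn (K_int.const_mul _).integrableOn
            measurableSet_Icc
          intro v hv
          apply mul_le_mul_of_nonneg_right _ (K_nonneg v)
          set w := (y - 1 / R) - v / R ^ 2 with hw
          have e1 : v / R ^ 2 ≤ 1 / R := by
            rw [div_le_div_iff₀ (by positivity) hR]; nlinarith [hv.2]
          have e2 : - (1 / R) ≤ v / R ^ 2 := by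
            rw [neg_le_iff_add_nonneg, show v / R ^ 2 + 1 / R = (v + R) / R ^ 2 by field_simp]
            have := hv.1
            apply div_nonneg <;> nlinarith
          have e3 : 2 / R = 1 / R + 1 / R := by ring
          have hyw : w ≤ y := by linarith
          have := h.mono w y hyw
          have h2 : B w ≤ B y * Real.exp (y - w) := by
            rw [Real.exp_sub, ← mul_div_assoc, le_div_iff₀ (Real.exp_pos _)]; exact this
          refine h2.trans ?_
          apply mul_le_mul_of_nonneg_left _ (h.nonneg y)
          apply Real.exp_le_exp.2
          linarith
      _ ≤ ∫ v, B y * Real.exp (2 / R) * K v := setIntegral_le_integral (K_int.const_mul _)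
          (Eventually.of_forall fun v => mul_nonneg
            (mul_nonneg (h.nonneg _) (Real.exp_pos _).le) (K_nonneg v))
      _ = _ := integral_const_mul _ _
  · rw [show (∫ v, K v) - ∫ v in Set.Icc (-R) R, K v = ∫ v in (Set.Icc (-R) R)ᶜ, K v by linarith,
      ← integral_const_mul]
    apply integral_mono (BK_int h _ _).restrict (K_int.const_mul _).restrict
    intro v
    exact mul_le_mul_of_nonneg_right (h.le _) (K_nonneg v)

theorem tauberian (h : Hyp B C G) : Tendsto B atTop (𝓝 1) := by
  set c := ∫ v, K v with hc
  have c0 : 0 < c := K_pos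
  have hR2 : Tendsto (fun R : ℝ => 2 / R) atTop (𝓝 0) := tendsto_id.const_div_atTop 2
  have hexp : Tendsto (fun R : ℝ => Real.exp (2 / R)) atTop (𝓝 1) := by
    simpa [Function.comp_def] using (Real.continuous_exp.tendsto 0).comp hR2
  have hexpn : Tendsto (fun R : ℝ => Real.exp (-(2 / R))) atTop (𝓝 1) := by
    simpa [Function.comp_def] using (Real.continuous_exp.tendsto 0).comp (by simpa using hR2.neg)
  have cpos : ∀ᶠ R : ℝ in atTop, 0 < ∫ v in Set.Icc (-R) R, K v :=
    cR_tendsto.eventually (lt_mem_nhds c0)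
  refine tendsto_order.2 ⟨fun a ha => ?_, fun a ha => ?_⟩
  · have t1 : Tendsto (fun R : ℝ => (a * Real.exp (2 / R) * c +
        C * (c - ∫ v in Set.Icc (-R) R, K v))) atTop (𝓝 (a * 1 * c + C * (c - c))) :=
      ((hexp.const_mul a).mul_const c).add ((cR_tendsto.const_sub c).const_mul C)
    have hlt : a * 1 * c + C * (c - c) < c := by nlinarith
    obtain ⟨R, hRlt, hR⟩ := ((t1.eventually (gt_mem_nhds hlt)).and (eventually_gt_atTop 0)).exists
    have hD := (stepD h (pow_pos hR 2)).comp (tendsto_atTop_add_const_right atTop (-(1 / R)) tendsto_id)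
    filter_upwards [hD.eventually (lt_mem_nhds hRlt)] with y hy
    have hl := lower h hR y
    simp only [Function.comp, id, ← sub_eq_add_neg] at hy
    have := hy.trans_le hl
    have h3 : a * (Real.exp (2 / R) * c) < B y * (Real.exp (2 / R) * c) := by
      rw [← hc] at this; linarith
    exact lt_of_mul_lt_mul_right h3 (by positivity)
  · have t1 : Tendsto (fun R : ℝ => a * Real.exp (-(2 / R)) * ∫ v in Set.Icc (-R) R, K v) atTop
        (𝓝 (a * 1 * c)) := (hexpn.const_mul a).mul cR_tendsto
    have hlt : c < a * 1 * c := by nlinarith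
    obtain ⟨R, ⟨hRlt, hR⟩, hcR⟩ := (((t1.eventually (lt_mem_nhds hlt)).and
      (eventually_gt_atTop 0)).and cpos).exists
    have hD := (stepD h (pow_pos hR 2)).comp (tendsto_atTop_add_const_right atTop (1 / R) tendsto_id)
    filter_upwards [hD.eventually (gt_mem_nhds hRlt)] with y hy
    have hl := upper h hR y
    simp only [Function.comp, id] at hy
    have := hl.trans_lt hy
    have h3 : B y * (Real.exp (-(2 / R)) * ∫ v in Set.Icc (-R) R, K v) <
        a * (Real.exp (-(2 / R)) * ∫ v in Set.Icc (-R) R, K v) := by linarith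
    exact lt_of_mul_lt_mul_right h3 (by positivity)

open Chebyshev ArithmeticFunction

lemma psi_int {s : ℂ} (hs : 1 < s.re) :
    LSeries (fun n => ((vonMangoldt n : ℝ) : ℂ)) s =
      s * ∫ t in Set.Ioi (1 : ℝ), ((psi t : ℝ) : ℂ) * (t : ℂ) ^ (-(s + 1)) := by
  have := LSeries_eq_mul_integral_of_nonneg (fun n => vonMangoldt n) zero_le_one hs ?_
    (fun n => vonMangoldt_nonneg)
  · rw [this]
    congr 2
    ext t
    simp only [psi]
    push_cast
    rfl
  · apply Asymptotics.IsBigO.of_bound (Real.log 4 + 4)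
    refine Eventually.of_forall fun n => ?_
    have e : ∑ k ∈ Finset.Icc 1 n, vonMangoldt k = psi n := by
      simp only [psi, Nat.floor_natCast]; rfl
    rw [e, Real.norm_eq_abs, abs_of_nonneg (psi_nonneg _), Real.rpow_one, Real.norm_eq_abs,
      abs_of_nonneg (Nat.cast_nonneg n)]
    exact psi_le_const_mul_self (Nat.cast_nonneg n)

/-- regular part of the logarithmic derivative -/
noncomputable def A (s : ℂ) : ℂ := vonMangoldt.LFunctionResidueClassAux (q := 1) 1 s

lemma A_eq {s : ℂ} (hs : 1 < s.re) :
    A s = LSeries (fun n => ((vonMangoldt n : ℝ) : ℂ)) s - 1 / (s - 1) := by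
  have := vonMangoldt.eqOn_LFunctionResidueClassAux (q := 1) (a := 1) isUnit_one hs
  rw [A, this]
  simp only [Nat.totient_one, Nat.cast_one, inv_one]
  congr 2
  ext n
  congr 1
  simp only [vonMangoldt.residueClass]
  rw [Set.indicator_of_mem]
  exact Subsingleton.elim _ _

lemma hyp : Hyp (fun u => psi (Real.exp u) * Real.exp (-u)) (Real.log 4 + 4)
    (fun z => A (1 + z) / (1 + z) - 1 / (1 + z)) where
  meas := by
    have := psi_mono.measurable
    fun_prop
  nonneg u := mul_nonneg (psi_nonneg _) (Real.exp_pos _).le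
  le u := by
    rw [Real.exp_neg, mul_inv_le_iff₀ (Real.exp_pos u)]
    exact psi_le_const_mul_self (Real.exp_pos u).le
  neg u hu := by
    rw [psi_eq_zero_of_le_one (Real.exp_le_one_iff.2 hu.le), zero_mul]
  mono u v huv := by
    simp only [mul_assoc, ← Real.exp_add, neg_add_cancel, Real.exp_zero, mul_one]
    exact psi_mono (Real.exp_le_exp.2 huv)
  cont := by
    have hne : ∀ z ∈ {z : ℂ | 0 ≤ z.re}, 1 + z ≠ 0 := by
      intro z hz h0
      have := congrArg Complex.re h0
      simp at this
      have hz' : 0 ≤ z.re := hz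
      linarith
    have hA : ContinuousOn (fun z => A (1 + z)) {z : ℂ | 0 ≤ z.re} := by
      apply (vonMangoldt.continuousOn_LFunctionResidueClassAux (q := 1) 1).comp (by fun_prop)
      intro z hz
      simpa using hz
    exact (hA.div (by fun_prop) hne).sub (continuousOn_const.div (by fun_prop) hne)
  lap z hz := by
    have hs : 1 < (1 + z).re := by simpa using hz
    have hz0 : z ≠ 0 := by rintro rfl; simp at hz
    have hs0 : 1 + z ≠ 0 := by
      intro h0; rw [h0] at hs; simp at hs; linarith
    have hp := psi_int hs
    have i2 : IntegrableOn (fun u : ℝ => Complex.exp (-z * u)) (Set.Ioi 0) :=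
      integrableOn_exp_mul_complex_Ioi (by simpa using hz) 0
    have v2 := integral_exp_mul_complex_Ioi (a := -z) (by simpa using hz) 0
    have i1 : IntegrableOn (fun u : ℝ => ((psi (Real.exp u) * Real.exp (-u) : ℝ) : ℂ) *
        Complex.exp (-z * u)) (Set.Ioi 0) := by
      have := psi_mono.measurable
      refine Integrable.bdd_mul (c := Real.log 4 + 4) i2
        (Measurable.aestronglyMeasurable (by fun_prop)) ?_
      refine Eventually.of_forall fun u => ?_
      rw [Complex.norm_real, Real.norm_eq_abs,
        abs_of_nonneg (mul_nonneg (psi_nonneg _) (Real.exp_pos _).le),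
        Real.exp_neg, mul_inv_le_iff₀ (Real.exp_pos u)]
      exact psi_le_const_mul_self (Real.exp_pos u).le
    have v1 : ∫ u in Set.Ioi (0 : ℝ), ((psi (Real.exp u) * Real.exp (-u) : ℝ) : ℂ) *
        Complex.exp (-z * u) = (A (1 + z) + 1 / z) / (1 + z) := by
      have hA := A_eq hs
      rw [add_sub_cancel_left] at hA
      rw [hA, sub_add_cancel, hp, mul_div_cancel_left₀ _ hs0]
      have hsub := integral_comp_exp_Ioi
        (fun t : ℝ => ((psi t : ℝ) : ℂ) * (t : ℂ) ^ (-((1 + z) + 1))) 0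
      rw [Real.exp_zero] at hsub
      rw [← hsub]
      congr 1
      ext u
      have e0 : ((Real.exp u : ℝ) : ℂ) ≠ 0 := by exact_mod_cast (Real.exp_pos u).ne'
      rw [Complex.cpow_def_of_ne_zero e0, ← Complex.ofReal_log (Real.exp_pos u).le, Real.log_exp,
        Complex.real_smul]
      have : Complex.exp (-u) * Complex.exp (-z * u) =
          Complex.exp u * Complex.exp (u * -((1 + z) + 1)) := by
        rw [← Complex.exp_add, ← Complex.exp_add]
        congr 1; ring
      push_cast
      linear_combination (psi (Real.exp u) : ℂ) * this
    have : ∀ u : ℝ, ((psi (Real.exp u) * Real.exp (-u) - 1 : ℝ) : ℂ) * Complex.exp (-z * u) =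
      ((psi (Real.exp u) * Real.exp (-u) : ℝ) : ℂ) * Complex.exp (-z * u) - Complex.exp (-z * u) := by
      intro u; push_cast; ring
    simp only [this]
    rw [integral_sub i1 i2, v1, v2]
    simp only [Complex.ofReal_zero, mul_zero, Complex.exp_zero]
    field_simp
    ring

theorem psi_asymp : Tendsto (fun x => psi x / x) atTop (𝓝 1) := by
  have := (tauberian hyp).comp Real.tendsto_log_atTop
  refine this.congr' ?_
  filter_upwards [eventually_gt_atTop 0] with x hx
  simp only [Function.comp, Real.exp_neg, Real.exp_log hx, div_eq_mul_inv]

theorem theta_asymp : Tendsto (fun x => theta x / x) atTop (𝓝 1) := by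
  have h1 : (psi - theta) =o[atTop] (fun x : ℝ => x) := by
    apply isBigO_psi_sub_theta_sqrt.trans_isLittleO
    have h0 : ∀ᶠ x : ℝ in atTop, x = 0 → √x = 0 := by
      filter_upwards [eventually_gt_atTop 0] with x hx hx0
      exact absurd hx0 hx.ne'
    rw [Asymptotics.isLittleO_iff_tendsto' h0]
    have : Tendsto (fun x : ℝ => (√x)⁻¹) atTop (𝓝 0) := Real.tendsto_sqrt_atTop.inv_tendsto_atTop
    refine this.congr fun x => ?_
    rw [Real.sqrt_div_self]
  have h2 := h1.tendsto_div_nhds_zero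
  have := psi_asymp.sub h2
  rw [sub_zero] at this
  refine this.congr fun x => ?_
  simp only [Pi.sub_apply]
  ring

theorem pi_asymp : Tendsto (fun x : ℝ => (Nat.primeCounting ⌊x⌋₊ : ℝ) * Real.log x / x) atTop (𝓝 1) := by
  have h := primeCounting_sub_theta_div_log_isBigO
  have h1 : Tendsto (fun x : ℝ => ((Nat.primeCounting ⌊x⌋₊ : ℝ) - theta x / Real.log x) * (Real.log x / x))
      atTop (𝓝 0) := by
    have hb := h.mul (Asymptotics.isBigO_refl (fun x : ℝ => Real.log x / x) atTop)
    apply hb.trans_tendsto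
    have : Tendsto (fun x : ℝ => (Real.log x)⁻¹) atTop (𝓝 0) :=
      Real.tendsto_log_atTop.inv_tendsto_atTop
    refine this.congr' ?_
    filter_upwards [eventually_gt_atTop 1] with x hx
    have := Real.log_pos hx
    field_simp
  have := h1.add theta_asymp
  rw [zero_add] at this
  refine this.congr' ?_
  filter_upwards [eventually_gt_atTop 1] with x hx
  have := Real.log_pos hx
  field_simp
  ring

theorem nth_asymp : Tendsto (fun n : ℕ => (Nat.nth Nat.Prime n : ℝ) / ((n + 1 : ℕ) * Real.log (n + 1 : ℕ)))
    atTop (𝓝 1) := by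
  set P : ℕ → ℝ := fun n => (Nat.nth Nat.Prime n : ℝ) with hP
  have hPt : Tendsto P atTop atTop :=
    tendsto_natCast_atTop_atTop.comp (Nat.nth_strictMono Nat.infinite_setOfPred_prime).tendsto_atTop
  have hpi : ∀ n, Nat.primeCounting (Nat.nth Nat.Prime n) = n + 1 := by
    intro n
    rw [Nat.primeCounting, Nat.primeCounting', Nat.count_succ]
    have h1 := Nat.primeCounting'_nth_eq n
    rw [Nat.primeCounting'] at h1
    rw [h1, if_pos (Nat.prime_nth_prime n)]
  have h1 : Tendsto (fun n => ((n + 1 : ℕ) : ℝ) * Real.log (P n) / P n) atTop (𝓝 1) := by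
    refine (pi_asymp.comp hPt).congr fun n => ?_
    simp only [Function.comp, hP, Nat.floor_natCast, hpi]
  have hlogP : Tendsto (fun n => Real.log (P n)) atTop atTop := Real.tendsto_log_atTop.comp hPt
  have hlog : Tendsto (fun n => Real.log (((n + 1 : ℕ) : ℝ) * Real.log (P n) / P n)) atTop (𝓝 0) := by
    simpa using h1.log one_ne_zero
  have hll : Tendsto (fun n => Real.log (Real.log (P n)) / Real.log (P n)) atTop (𝓝 0) :=
    (Real.isLittleO_log_id_atTop.tendsto_div_nhds_zero).comp hlogP
  have h2 : Tendsto (fun n => Real.log ((n + 1 : ℕ) : ℝ) / Real.log (P n)) atTop (𝓝 1) := by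
    have := ((hlog.div_atTop hlogP).sub hll).add_const 1
    simp only [sub_zero, zero_add] at this
    refine this.congr' ?_
    filter_upwards [hlogP.eventually_gt_atTop 0, hPt.eventually_gt_atTop 0] with n hn hn'
    have hn1 : ((n + 1 : ℕ) : ℝ) ≠ 0 := by positivity
    rw [Real.log_div (by positivity) hn'.ne', Real.log_mul hn1 hn.ne']
    field_simp
    ring
  have h3 := (h1.mul h2).inv₀ (by norm_num)
  simp only [mul_one, inv_one] at h3
  refine h3.congr' ?_
  filter_upwards [hlogP.eventually_gt_atTop 0, hPt.eventually_gt_atTop 0] with n hn hn'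
  change _ = P n / _
  field_simp

end PNT

theorem nth_prime_asymptotic :
    Tendsto (fun n : ℕ => (p n : ℝ) / (n * Real.log n)) atTop (𝓝 1) := by
  rw [← tendsto_add_atTop_iff_nat 1]
  exact PNT.nth_asymp
end
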